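/- arXiv:1202.0211 — 11 statements merged into one kernel-verified Lean document; each statement's English description precedes it below -/
import Mathlib

section
/- Define w(n) = v(n)·v(n+1), where v(n) = (-1)^{ν(n)}. Then for every n ≥ 0 one has w(2n) = (-1)^n and w(2n+1) = (-1)^{n+1}·w(n); in particular (w(n))_{n≥0} is a paperfolding sequence. -/
/-!
Appending a binary digit shifts the positions counted by `ν` up by one and can create at most one
new one, at index `0`. Appending `1` creates none, so `v (2n+1) = v n`; appending `0` creates one
exactly when `n` is odd, so `v (2n) = (-1)^n v n`. Both recurrences for `w` follow from these two
identities and `v n ^ 2 = 1`.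
-/


/-- ν(n): the number of indices `i ≥ 0` such that the `i`-th binary digit of `n`
is `0` and the `(i+1)`-st binary digit of `n` is `1`. -/
noncomputable def nu (n : ℕ) : ℕ :=
  Set.ncard {i : ℕ | n.testBit i = false ∧ n.testBit (i + 1) = true}

/-- v(n) = (-1)^{ν(n)}. -/
noncomputable def v (n : ℕ) : ℤ := (-1) ^ (nu n)

/-- w(n) = v(n)·v(n+1). -/
noncomputable def w (n : ℕ) : ℤ := v n * v (n + 1)

/-- A counted index `i` satisfies `i < 2 ^ (i + 1) ≤ n`. This finiteness is needed because
`Set.ncard` is `0` on infinite sets. -/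
lemma nu_set_finite (n : ℕ) :
    {i : ℕ | n.testBit i = false ∧ n.testBit (i + 1) = true}.Finite := by
  refine (Set.finite_lt_nat n).subset ?_
  rintro i ⟨-, h⟩
  have h1 := Nat.ge_two_pow_of_testBit h
  have h2 : i + 1 < 2 ^ (i + 1) := Nat.lt_two_pow_self
  simp only [Set.mem_ofPred_eq]
  omega

lemma nu_two_mul_add_one (n : ℕ) : nu (2 * n + 1) = nu n := by
  unfold nu
  rw [← Set.ncard_image_of_injective
    {i : ℕ | n.testBit i = false ∧ n.testBit (i + 1) = true} Nat.succ_injective]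
  congr 1
  ext i
  have hd : (2 * n + 1) / 2 = n := by omega
  cases i with
  | zero => simp
  | succ j => simp [Nat.testBit_succ (2 * n + 1), hd]

lemma nu_two_mul (n : ℕ) : nu (2 * n) = nu n + n % 2 := by
  unfold nu
  rw [← Set.ncard_image_of_injective
    {i : ℕ | n.testBit i = false ∧ n.testBit (i + 1) = true} Nat.succ_injective]
  have hd : 2 * n / 2 = n := by omega
  rcases Nat.mod_two_eq_zero_or_one n with h | h
  · rw [h, add_zero]
    congr 1
    ext i
    cases i with
    | zero => simp [Nat.testBit_succ (2 * n), hd, h]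
    | succ j => simp [Nat.testBit_succ (2 * n), hd]
  · rw [h, ← Set.ncard_insert_of_notMem (a := 0) (by simp) ((nu_set_finite n).image _)]
    congr 1
    ext i
    cases i with
    | zero => simp [Nat.testBit_succ (2 * n), hd, h]
    | succ j => simp [Nat.testBit_succ (2 * n), hd]

lemma v_two_mul_add_one (n : ℕ) : v (2 * n + 1) = v n := by
  unfold v
  rw [nu_two_mul_add_one]

lemma v_two_mul (n : ℕ) : v (2 * n) = (-1) ^ n * v n := by
  unfold v
  rw [nu_two_mul, pow_add, mul_comm, ← neg_one_pow_eq_pow_mod_two]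

lemma v_mul_self (n : ℕ) : v n * v n = 1 := by
  unfold v
  rw [← mul_pow]
  simp

theorem w_recurrence :
    ∀ n : ℕ, w (2 * n) = (-1) ^ n ∧ w (2 * n + 1) = (-1) ^ (n + 1) * w n := by
  intro n
  unfold w
  constructor
  · rw [v_two_mul, v_two_mul_add_one, mul_assoc, v_mul_self, mul_one]
  · rw [v_two_mul_add_one, show 2 * n + 1 + 1 = 2 * (n + 1) by ring, v_two_mul]
    ring
end

section
/- For every n ≥ 0, the Stern-Brocot number u(n) equals the number of integers r with 0 ≤ 2r ≤ n such that the binomial coefficient C(n-r, r) is odd. -/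
/-!
The count of odd binomials is the sum of the parities of `C(n - r, r)`. Splitting this sum according
to the parity of `r` and applying Lucas' theorem modulo `2` shows that it satisfies the recursion
of `u`: for `n = 2m`, the terms `r = 2s` have the parity of `C(m - s, s)` and the terms
`r = 2s + 1` that of `C(m - 1 - s, s)`; for `n = 2m + 1`, the terms `r = 2s` again have the parity
of `C(m - s, s)`, and the terms `r = 2s + 1` are all even, being of the form `C(2a, 2s + 1)`.
The theorem follows by strong induction.
-/

theorem choose_mod_two (a b : ℕ) :
    a.choose b % 2 = ((a % 2).choose (b % 2) * (a / 2).choose (b / 2)) % 2 :=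
  haveI : Fact (Nat.Prime 2) := ⟨Nat.prime_two⟩
  Choose.choose_modEq_choose_mod_mul_choose_div_nat (n := a) (k := b) (p := 2)

theorem choose_even_even (a b : ℕ) : (2 * a).choose (2 * b) % 2 = a.choose b % 2 := by
  rw [choose_mod_two]; simp

theorem choose_odd_even (a b : ℕ) : (2 * a + 1).choose (2 * b) % 2 = a.choose b % 2 := by
  rw [choose_mod_two, show (2 * a + 1) / 2 = a by omega]; simp

theorem choose_even_odd (a b : ℕ) : (2 * a).choose (2 * b + 1) % 2 = 0 := by
  rw [choose_mod_two]; simp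

theorem choose_odd_odd (a b : ℕ) : (2 * a + 1).choose (2 * b + 1) % 2 = a.choose b % 2 := by
  rw [choose_mod_two, show (2 * a + 1) / 2 = a by omega, show (2 * b + 1) / 2 = b by omega]; simp

/-- The number of `r` with `C(n - r, r)` odd, as a sum of parities. -/
def oddCount (n : ℕ) : ℕ := ∑ r ∈ Finset.range (n + 1), (n - r).choose r % 2

theorem choose_sub_eq_zero {n r : ℕ} (h : n < 2 * r) : (n - r).choose r = 0 :=
  Nat.choose_eq_zero_of_lt (by omega)

/-- The range of summation may be enlarged: for `r > n` the truncated subtraction gives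
`C(0, r) = 0`. -/
theorem oddCount_eq_sum_succ (n : ℕ) :
    oddCount n = ∑ r ∈ Finset.range (n + 2), (n - r).choose r % 2 := by
  rw [Finset.sum_range_succ, choose_sub_eq_zero (by omega)]; rfl

theorem card_eq_oddCount (n : ℕ) :
    ((Finset.range (n + 1)).filter
      (fun r => 2 * r ≤ n ∧ Nat.choose (n - r) r % 2 = 1)).card = oddCount n := by
  rw [Finset.card_filter, oddCount]
  refine Finset.sum_congr rfl fun r _ => ?_
  by_cases h : 2 * r ≤ n
  · rcases Nat.mod_two_eq_zero_or_one ((n - r).choose r) with h' | h' <;> simp [h, h']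
  · simp [h, choose_sub_eq_zero (not_le.mp h)]

theorem sum_range_two_mul (f : ℕ → ℕ) (k : ℕ) :
    ∑ r ∈ Finset.range (2 * k), f r = ∑ s ∈ Finset.range k, (f (2 * s) + f (2 * s + 1)) := by
  induction k with
  | zero => simp
  | succ k ih =>
    rw [show 2 * (k + 1) = 2 * k + 1 + 1 by ring, Finset.sum_range_succ, Finset.sum_range_succ,
      Finset.sum_range_succ, ih, add_assoc]

theorem oddCount_even (m : ℕ) (hm : 1 ≤ m) :
    oddCount (2 * m) = oddCount m + oddCount (m - 1) := by
  rw [oddCount_eq_sum_succ (2 * m), oddCount_eq_sum_succ (m - 1), oddCount,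
    show m - 1 + 2 = m + 1 by omega, show 2 * m + 2 = 2 * (m + 1) by ring, sum_range_two_mul,
    ← Finset.sum_add_distrib]
  refine Finset.sum_congr rfl fun s hs => ?_
  have hs : s ≤ m := Nat.lt_succ_iff.mp (Finset.mem_range.mp hs)
  rw [← Nat.mul_sub, choose_even_even]
  congr 1
  rcases hs.eq_or_lt with rfl | hlt
  · rw [choose_sub_eq_zero (by omega), choose_sub_eq_zero (by omega)]
  · rw [show 2 * m - (2 * s + 1) = 2 * (m - 1 - s) + 1 by omega, choose_odd_odd]

theorem oddCount_odd (m : ℕ) : oddCount (2 * m + 1) = oddCount m := by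
  rw [oddCount, oddCount, show 2 * m + 1 + 1 = 2 * (m + 1) by ring, sum_range_two_mul]
  refine Finset.sum_congr rfl fun s hs => ?_
  have hs : s ≤ m := Nat.lt_succ_iff.mp (Finset.mem_range.mp hs)
  rw [show 2 * m + 1 - 2 * s = 2 * (m - s) + 1 by omega, choose_odd_even,
    show 2 * m + 1 - (2 * s + 1) = 2 * (m - s) by omega, choose_even_odd, add_zero]

/-- Carlitz's formula: the Stern-Brocot number `u n` equals the number of
integers `r` with `0 ≤ 2r ≤ n` such that the binomial coefficient
`C(n-r, r)` is odd. -/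
theorem stern_eq_card_odd_binomials
    (u : ℕ → ℕ) (h0 : u 0 = 1) (h1 : u 1 = 1)
    (heven : ∀ n : ℕ, 1 ≤ n → u (2 * n) = u n + u (n - 1))
    (hodd : ∀ n : ℕ, 1 ≤ n → u (2 * n + 1) = u n) :
    ∀ n : ℕ, u n =
      ((Finset.range (n + 1)).filter
        (fun r => 2 * r ≤ n ∧ Nat.choose (n - r) r % 2 = 1)).card := by
  intro n
  rw [card_eq_oddCount]
  induction n using Nat.strong_induction_on with
  | _ n ih =>
    obtain ⟨m, rfl | rfl⟩ := Nat.even_or_odd' n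
    · rcases Nat.eq_zero_or_pos m with rfl | hm
      · simp [h0, oddCount]
      · rw [heven m hm, oddCount_even m hm, ih m (by omega), ih (m - 1) (by omega)]
    · rcases Nat.eq_zero_or_pos m with rfl | hm
      · rw [oddCount_odd]
        simp [h1, oddCount]
      · rw [hodd m hm, oddCount_odd, ih m (by omega)]
end

section
/- For every n ≥ 0, the Stern-Brocot number u(n) equals the number of integers k with 0 ≤ k ≤ n such that k ≡ n (mod 2) and k is dominated by (n+k)/2, i.e., every binary digit of k is less than or equal to the corresponding binary digit of (n+k)/2. -/
/-!
Write `S n` for the set of admissible `k`. Splitting off the lowest binary digit of `k` gives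
`S (2 n + 1) = 2 S n + 1` and, for `n ≥ 1`, `S (2 n) = 2 (S n ∪ S (n - 1))`. The last union is
disjoint, since the elements of `S m` have the parity of `m`. Hence `n ↦ |S n|` satisfies the
recursion defining `u`, with the same initial values.

In the odd case the lowest digit of `k` is `1`, so `(2 n + 1 + k) / 2` must be odd, which is the
parity condition for `S n`. In the even case the lowest digit of `k = 2 k'` imposes nothing, and
the parity of `n + k'` decides whether `k'` belongs to `S n` or to `S (n - 1)`.
-/

/-- Every binary digit of `k` is at most the corresponding binary digit of `m`. -/
def BitDominated (k m : ℕ) : Prop := ∀ i : ℕ, k.testBit i = true → m.testBit i = true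

/-- The set of `k ≤ n` of the same parity as `n` that are dominated by `(n + k) / 2`. -/
def dominatedSet (n : ℕ) : Set ℕ :=
  {k : ℕ | k ≤ n ∧ k % 2 = n % 2 ∧ BitDominated k ((n + k) / 2)}

lemma bitDominated_iff_half (k m : ℕ) :
    BitDominated k m ↔ (k % 2 = 1 → m % 2 = 1) ∧ BitDominated (k / 2) (m / 2) := by
  constructor
  · intro h
    refine ⟨by simpa [Nat.testBit_zero] using h 0, fun i hi => ?_⟩
    rw [← Nat.testBit_succ] at hi ⊢
    exact h _ hi
  · rintro ⟨h, h'⟩ (_ | i) hi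
    · simpa [Nat.testBit_zero] using h (by simpa [Nat.testBit_zero] using hi)
    · rw [Nat.testBit_succ] at hi ⊢
      exact h' i hi

lemma dominatedSet_finite (n : ℕ) : (dominatedSet n).Finite :=
  (Set.finite_Iic n).subset fun _ hk => hk.1

lemma dominatedSet_odd (n : ℕ) :
    dominatedSet (2 * n + 1) = (fun k => 2 * k + 1) '' dominatedSet n := by
  ext k
  simp only [dominatedSet, Set.mem_image, Set.mem_ofPred_eq]
  constructor
  · rintro ⟨hle, hpar, hdom⟩
    obtain ⟨hbit, hdom⟩ := (bitDominated_iff_half _ _).1 hdom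
    have hm := hbit (by omega)
    refine ⟨k / 2, ⟨by omega, by omega, ?_⟩, by omega⟩
    convert hdom using 1
    omega
  · rintro ⟨l, ⟨hle, hpar, hdom⟩, rfl⟩
    refine ⟨by omega, by omega, (bitDominated_iff_half _ _).2 ⟨by omega, ?_⟩⟩
    convert hdom using 1 <;> omega

lemma dominatedSet_even (n : ℕ) (hn : 1 ≤ n) :
    dominatedSet (2 * n) = (fun k => 2 * k) '' (dominatedSet n ∪ dominatedSet (n - 1)) := by
  ext k
  simp only [dominatedSet, Set.mem_image, Set.mem_union, Set.mem_ofPred_eq]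
  constructor
  · rintro ⟨hle, hpar, hdom⟩
    have hdom := ((bitDominated_iff_half _ _).1 hdom).2
    refine ⟨k / 2, ?_, by omega⟩
    by_cases hp : k / 2 % 2 = n % 2
    · refine Or.inl ⟨by omega, hp, ?_⟩
      convert hdom using 1
      omega
    · refine Or.inr ⟨by omega, by omega, ?_⟩
      convert hdom using 1
      omega
  · rintro ⟨l, ⟨hle, hpar, hdom⟩ | ⟨hle, hpar, hdom⟩, rfl⟩ <;>
    · refine ⟨by omega, by omega, (bitDominated_iff_half _ _).2 ⟨by omega, ?_⟩⟩
      convert hdom using 1 <;> omega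

lemma dominatedSet_disjoint (n : ℕ) (hn : 1 ≤ n) :
    Disjoint (dominatedSet n) (dominatedSet (n - 1)) := by
  rw [Set.disjoint_left]
  rintro k ⟨_, h, _⟩ ⟨_, h', _⟩
  omega

lemma dominatedSet_zero : dominatedSet 0 = {0} := by
  ext k
  simp only [dominatedSet, Set.mem_ofPred_eq, Set.mem_singleton_iff]
  constructor
  · rintro ⟨h, _⟩
    omega
  · rintro rfl
    exact ⟨le_rfl, rfl, fun _ h => h⟩

lemma ncard_dominatedSet_odd (n : ℕ) :
    (dominatedSet (2 * n + 1)).ncard = (dominatedSet n).ncard := by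
  rw [dominatedSet_odd]
  exact Set.ncard_image_of_injective _ fun a b h => by simpa using h

lemma ncard_dominatedSet_even (n : ℕ) (hn : 1 ≤ n) :
    (dominatedSet (2 * n)).ncard = (dominatedSet n).ncard + (dominatedSet (n - 1)).ncard := by
  rw [dominatedSet_even n hn, Set.ncard_image_of_injective _ fun a b h => by simpa using h]
  exact Set.ncard_union_eq (dominatedSet_disjoint n hn) (dominatedSet_finite _)
    (dominatedSet_finite _)

/-- The Stern-Brocot number `u n` equals the number of integers `k` with
`0 ≤ k ≤ n` such that `k ≡ n (mod 2)` and every binary digit of `k` is at most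
the corresponding binary digit of `(n+k)/2` (i.e. `(n+k)/2` dominates `k`). -/
theorem stern_eq_card_dominated
    (u : ℕ → ℕ) (h0 : u 0 = 1) (h1 : u 1 = 1)
    (heven : ∀ n : ℕ, 1 ≤ n → u (2 * n) = u n + u (n - 1))
    (hodd : ∀ n : ℕ, 1 ≤ n → u (2 * n + 1) = u n) :
    ∀ n : ℕ, u n =
      Set.ncard {k : ℕ | k ≤ n ∧ k % 2 = n % 2 ∧
        ∀ i : ℕ, k.testBit i = true → ((n + k) / 2).testBit i = true} := by
  intro n
  change u n = (dominatedSet n).ncard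
  induction n using Nat.strong_induction_on with
  | _ n ih =>
    have hz : (dominatedSet 0).ncard = 1 := by rw [dominatedSet_zero, Set.ncard_singleton]
    obtain ⟨m, rfl | rfl⟩ := Nat.even_or_odd' n
    · rcases Nat.eq_zero_or_pos m with rfl | hm
      · rw [Nat.mul_zero, h0, hz]
      · rw [heven m hm, ncard_dominatedSet_even m hm, ih m (by omega), ih (m - 1) (by omega)]
    · rw [ncard_dominatedSet_odd]
      rcases Nat.eq_zero_or_pos m with rfl | hm
      · rw [hz]
        exact h1
      · rw [hodd m hm, ih m (by omega)]
end

section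
/- Let t : ℕ → ℤ be the ±1 Thue-Morse sequence (t(0) = 1, t(2n) = t(n), t(2n+1) = -t(n)). Define γ(n) = Σ_{0 ≤ 2r ≤ n} C₂(n-r, r) · t(r) · t(n-r), where C₂(a,b) ∈ {0,1} is the value of C(a,b) modulo 2. Then the sequence (γ(n))_{n≥0} is 3-periodic with period (1, -1, 0): for every j ≥ 0, γ(3j) = 1, γ(3j+1) = -1, and γ(3j+2) = 0. -/
/-! Put `F m r = C₂(m, r) t(r) t(m)`, so that `γ n = ∑_{m + r = n} F m r`. Lucas' theorem modulo 2
and the recursion for `t` express `F` at `(2m + a, 2r + b)`, `a, b ∈ {0, 1}`, as `F m r` times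
`1` for `(a, b) = (0, 0)` and `(1, 1)`, `-1` for `(1, 0)`, and `0` for `(0, 1)`. Splitting the sum
by the parity of `r` gives
`γ (2k + 1) = -γ k` and `γ (2k + 2) = γ (k + 1) + γ k`. The sequence with period `(1, -1, 0)`
satisfies the same recursion and has the same value at `0`. -/

/-- The term `C₂(m, r) t(r) t(m)` of the sum `γ (m + r)`. -/
def gammaTerm (t : ℕ → ℤ) (m r : ℕ) : ℤ :=
  ((Nat.choose m r % 2 : ℕ) : ℤ) * t r * t m

/-- The sum of `C₂(n - r, r) t(r) t(n - r)` over all `0 ≤ r ≤ n`; the terms with `2r > n`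
vanish. -/
def gammaSum (t : ℕ → ℤ) (n : ℕ) : ℤ :=
  ∑ r ∈ Finset.range (n + 1), gammaTerm t (n - r) r

lemma choose_two_mul_add_mod_two (m r a b : ℕ) (ha : a < 2) (hb : b < 2) :
    Nat.choose (2 * m + a) (2 * r + b) % 2 = (Nat.choose a b * Nat.choose m r) % 2 := by
  have h := Choose.choose_modEq_choose_mod_mul_choose_div_nat
    (n := 2 * m + a) (k := 2 * r + b) (p := 2)
  rw [show (2 * m + a) % 2 = a by omega, show (2 * r + b) % 2 = b by omega,
    show (2 * m + a) / 2 = m by omega, show (2 * r + b) / 2 = r by omega] at h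
  exact h

lemma sum_range_two_mul_split (f : ℕ → ℤ) (n : ℕ) :
    ∑ i ∈ Finset.range (2 * n), f i =
      ∑ i ∈ Finset.range n, (f (2 * i) + f (2 * i + 1)) := by
  induction n with
  | zero => simp
  | succ n ih =>
    rw [Finset.sum_range_succ, ← ih, show 2 * (n + 1) = 2 * n + 1 + 1 by ring,
      Finset.sum_range_succ, Finset.sum_range_succ, add_assoc]

lemma gammaTerm_even_even {t : ℕ → ℤ} (hteven : ∀ n : ℕ, t (2 * n) = t n) (m r : ℕ) :
    gammaTerm t (2 * m) (2 * r) = gammaTerm t m r := by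
  have h := choose_two_mul_add_mod_two m r 0 0 (by norm_num) (by norm_num)
  simp only [add_zero, Nat.choose_self, one_mul] at h
  simp only [gammaTerm, h, hteven]

lemma gammaTerm_even_odd (t : ℕ → ℤ) (m r : ℕ) : gammaTerm t (2 * m) (2 * r + 1) = 0 := by
  have h := choose_two_mul_add_mod_two m r 0 1 (by norm_num) (by norm_num)
  simp only [add_zero, Nat.choose_zero_succ, zero_mul, Nat.zero_mod] at h
  simp [gammaTerm, h]

lemma gammaTerm_odd_even {t : ℕ → ℤ} (hteven : ∀ n : ℕ, t (2 * n) = t n)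
    (htodd : ∀ n : ℕ, t (2 * n + 1) = -t n) (m r : ℕ) :
    gammaTerm t (2 * m + 1) (2 * r) = -gammaTerm t m r := by
  have h := choose_two_mul_add_mod_two m r 1 0 (by norm_num) (by norm_num)
  simp only [add_zero, Nat.choose_zero_right, one_mul] at h
  simp only [gammaTerm, h, hteven, htodd]
  ring

lemma gammaTerm_odd_odd {t : ℕ → ℤ} (htodd : ∀ n : ℕ, t (2 * n + 1) = -t n) (m r : ℕ) :
    gammaTerm t (2 * m + 1) (2 * r + 1) = gammaTerm t m r := by
  have h := choose_two_mul_add_mod_two m r 1 1 (by norm_num) (by norm_num)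
  simp only [Nat.choose_self, one_mul] at h
  simp only [gammaTerm, h, htodd]
  ring

lemma gammaSum_odd {t : ℕ → ℤ} (hteven : ∀ n : ℕ, t (2 * n) = t n)
    (htodd : ∀ n : ℕ, t (2 * n + 1) = -t n) (k : ℕ) :
    gammaSum t (2 * k + 1) = -gammaSum t k := by
  unfold gammaSum
  rw [show 2 * k + 1 + 1 = 2 * (k + 1) by ring, sum_range_two_mul_split,
    ← Finset.sum_neg_distrib]
  refine Finset.sum_congr rfl fun i hi => ?_
  have hi := Finset.mem_range.1 hi
  rw [show 2 * k + 1 - 2 * i = 2 * (k - i) + 1 by omega,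
    show 2 * k + 1 - (2 * i + 1) = 2 * (k - i) by omega,
    gammaTerm_odd_even hteven htodd, gammaTerm_even_odd, add_zero]

lemma gammaSum_even {t : ℕ → ℤ} (hteven : ∀ n : ℕ, t (2 * n) = t n)
    (htodd : ∀ n : ℕ, t (2 * n + 1) = -t n) (k : ℕ) :
    gammaSum t (2 * k + 2) = gammaSum t (k + 1) + gammaSum t k := by
  unfold gammaSum
  rw [show 2 * k + 2 + 1 = 2 * (k + 1) + 1 by ring, Finset.sum_range_succ,
    sum_range_two_mul_split, Finset.sum_add_distrib, Finset.sum_range_succ _ (k + 1),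
    show 2 * k + 2 - 2 * (k + 1) = 2 * (k + 1 - (k + 1)) by omega,
    gammaTerm_even_even hteven, add_right_comm]
  congr 1
  · congr 1
    refine Finset.sum_congr rfl fun i hi => ?_
    rw [show 2 * k + 2 - 2 * i = 2 * (k + 1 - i) by omega, gammaTerm_even_even hteven]
  · refine Finset.sum_congr rfl fun i hi => ?_
    have hi := Finset.mem_range.1 hi
    rw [show 2 * k + 2 - (2 * i + 1) = 2 * (k - i) + 1 by omega, gammaTerm_odd_odd htodd]

lemma gammaSum_eq {t : ℕ → ℤ} (hteven : ∀ n : ℕ, t (2 * n) = t n)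
    (htodd : ∀ n : ℕ, t (2 * n + 1) = -t n) (ht0 : t 0 = 1) (n : ℕ) :
    gammaSum t n = if n % 3 = 0 then 1 else if n % 3 = 1 then -1 else 0 := by
  induction n using Nat.strong_induction_on with
  | _ n ih =>
    obtain rfl | ⟨k, rfl⟩ | ⟨k, rfl⟩ : n = 0 ∨ (∃ k, n = 2 * k + 1) ∨ ∃ k, n = 2 * k + 2 := by
      rcases Nat.even_or_odd' n with ⟨k, rfl | rfl⟩
      · rcases k with _ | k
        · exact Or.inl rfl
        · exact Or.inr (Or.inr ⟨k, by ring⟩)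
      · exact Or.inr (Or.inl ⟨k, rfl⟩)
    · simp [gammaSum, gammaTerm, ht0]
    · rw [gammaSum_odd hteven htodd, ih k (by omega)]
      split_ifs <;> omega
    · rw [gammaSum_even hteven htodd, ih k (by omega), ih (k + 1) (by omega)]
      split_ifs <;> omega

/-- Let `t` be the ±1 Thue-Morse sequence. Then the sequence
`γ(n) = Σ_{0 ≤ 2r ≤ n} C₂(n-r, r) · t(r) · t(n-r)` (where `C₂(a,b) ∈ {0,1}` is
the binomial coefficient mod 2) is 3-periodic with period `(1, -1, 0)`. -/
theorem gamma_three_periodic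
    (t : ℕ → ℤ) (ht0 : t 0 = 1)
    (hteven : ∀ n : ℕ, t (2 * n) = t n)
    (htodd : ∀ n : ℕ, t (2 * n + 1) = -t n)
    (γ : ℕ → ℤ)
    (hγ : ∀ n : ℕ, γ n =
      ∑ r ∈ Finset.range (n / 2 + 1),
        ((Nat.choose (n - r) r % 2 : ℕ) : ℤ) * t r * t (n - r)) :
    ∀ j : ℕ, γ (3 * j) = 1 ∧ γ (3 * j + 1) = -1 ∧ γ (3 * j + 2) = 0 := by
  have hsum : ∀ n, γ n = gammaSum t n := by
    intro n
    rw [hγ]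
    refine Finset.sum_subset (Finset.range_mono (by omega)) fun r _ hr => ?_
    have hr : ¬ r < n / 2 + 1 := fun h => hr (Finset.mem_range.2 h)
    rw [Nat.choose_eq_zero_of_lt (show n - r < r by omega)]
    simp
  intro j
  simp only [hsum, gammaSum_eq hteven htodd ht0]
  refine ⟨?_, ?_, ?_⟩ <;> split_ifs <;> omega
end

section
/- For n ≥ 0 define the polynomial S_n over 𝔽₂ = ℤ/2ℤ by S_n(X) = Σ_{0 ≤ k ≤ n, k ≡ n (mod 2)} C₂((n+k)/2, k) · X^k, where C₂(a,b) ∈ 𝔽₂ is the binomial coefficient C(a,b) reduced modulo 2. Then for every n ≥ 1, S_n(X)² + S_{n+1}(X)·S_{n-1}(X) = 1 in 𝔽₂[X]. (This is the congruence Q_n² - Q_{n+1}Q_{n-1} ≡ 1 (mod 2) for the convergent denominators Q_n.) -/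
/-!
By Pascal's rule, `S (n + 2) = X * S (n + 1) + S n`: the sequence satisfies a linear recurrence of
order two whose companion matrix has determinant `-1 = 1` in characteristic 2. Hence the Casoratian
`S (n + 1) ^ 2 + S (n + 2) * S n` does not depend on `n`, and it equals `1` at `n = 0`, where
`S 0 = 1` and `S 1 = X`.
-/

/-- The reduction modulo 2 of the denominator `Q n` of the `n`-th convergent:
`S n = Σ_{0 ≤ k ≤ n, k ≡ n (mod 2)} C₂((n+k)/2, k) · X^k` over `𝔽₂`. -/
noncomputable def S (n : ℕ) : Polynomial (ZMod 2) :=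
  ∑ k ∈ Finset.range (n + 1),
    if k % 2 = n % 2 then
      Polynomial.C ((Nat.choose ((n + k) / 2) k : ZMod 2)) * Polynomial.X ^ k
    else 0

/-- The coefficient formula holds for every `k`, without the bound `k ≤ n`: for `k > n` one has
`(n + k) / 2 < k`, so the binomial coefficient vanishes. -/
lemma S_coeff (n k : ℕ) :
    (S n).coeff k = if k % 2 = n % 2 then (Nat.choose ((n + k) / 2) k : ZMod 2) else 0 := by
  have h (j : ℕ) : (if j % 2 = n % 2 then
      Polynomial.C ((Nat.choose ((n + j) / 2) j : ZMod 2)) * Polynomial.X ^ j else 0).coeff k =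
      if k = j then
        (if k % 2 = n % 2 then (Nat.choose ((n + k) / 2) k : ZMod 2) else 0) else 0 := by
    by_cases hkj : k = j
    · subst hkj
      rw [if_pos rfl]
      split_ifs <;> simp
    · split_ifs <;> simp [Polynomial.coeff_X_pow, hkj]
  rw [S, Polynomial.finsetSum_coeff, Finset.sum_congr rfl fun j _ => h j, Finset.sum_ite_eq]
  by_cases hk : k < n + 1
  · simp [hk]
  · rw [Nat.choose_eq_zero_of_lt (by omega : (n + k) / 2 < k)]
    simp

lemma S_add_two (n : ℕ) : S (n + 2) = Polynomial.X * S (n + 1) + S n := by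
  ext k
  cases k with
  | zero => simp [S_coeff]
  | succ k =>
    rw [Polynomial.coeff_add, Polynomial.coeff_X_mul, S_coeff, S_coeff, S_coeff]
    by_cases h : (k + 1) % 2 = n % 2
    · rw [if_pos (by omega), if_pos (by omega), if_pos h,
        show (n + 2 + (k + 1)) / 2 = (n + 1 + k) / 2 + 1 by omega,
        show (n + (k + 1)) / 2 = (n + 1 + k) / 2 by omega, Nat.choose_succ_succ']
      push_cast
      rfl
    · rw [if_neg (by omega), if_neg (by omega), if_neg h, add_zero]

lemma S_zero : S 0 = 1 := by simp [S]

lemma S_one : S 1 = Polynomial.X := by simp [S, Finset.sum_range_succ]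

/-- For every `n ≥ 1`, `S_n² + S_{n+1}·S_{n-1} = 1` in `𝔽₂[X]`; this is the
congruence `Q_n² - Q_{n+1}Q_{n-1} ≡ 1 (mod 2)`. -/
theorem S_determinant_identity :
    ∀ n : ℕ, 1 ≤ n → S n ^ 2 + S (n + 1) * S (n - 1) = 1 := by
  have two : (2 : Polynomial (ZMod 2)) = 0 := CharTwo.two_eq_zero
  intro n hn
  induction n, hn using Nat.le_induction with
  | base =>
    rw [S_add_two 0, S_one, Nat.sub_self, S_zero]
    linear_combination Polynomial.X ^ 2 * two
  | succ m hm ih =>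
    obtain ⟨n, rfl⟩ : ∃ n, m = n + 1 := ⟨m - 1, by omega⟩
    simp only [Nat.add_sub_cancel] at ih ⊢
    -- The two Casoratians differ by `S (n + 2) * (X * S (n + 1) + S (n + 2) - S n)`,
    -- and the second factor is `2 * X * S (n + 1)`.
    rw [S_add_two (n + 1)]
    linear_combination ih + S (n + 2) * S_add_two n + S (n + 2) * Polynomial.X * S (n + 1) * two
end

section
/- Let U_n denote the n-th Chebyshev polynomial of the second kind and consider the polynomial U_n(X/2) ∈ ℚ[X]. Then for every n ≥ 0 and every k ≥ 0, the coefficient of X^k in U_n(X/2) is an integer m satisfying: if k ≡ n (mod 2) then m ≡ C((n+k)/2, k) (mod 2), and if k ≢ n (mod 2) then m = 0. In other words, the reduction modulo 2 of U_n(X/2) equals Σ_{0 ≤ k ≤ n, k ≡ n (mod 2)} C₂((n+k)/2, k) X^k, the reduction modulo 2 of Q_n(X). -/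
/-!
The polynomial `U_n(X/2)` is the rescaled Chebyshev polynomial `S_n`, which satisfies
`S_{n+2} = X S_{n+1} - S_n` and therefore has integer coefficients. Modulo 2, the coefficient
recurrence `s(n+2, k+1) = s(n+1, k) + s(n, k+1)` is Pascal's rule
`C(N+1, k+1) = C(N, k) + C(N, k+1)` with `N = (n+k+1)/2`, and it preserves the parity condition
`k ≡ n (mod 2)`; a two-step induction on `n` concludes.
-/

open Polynomial in
theorem coeff_chebyshevS_mod_two (n : ℕ) : ∀ k : ℕ,
    (k % 2 = n % 2 → (((Chebyshev.S ℤ (n : ℤ)).coeff k : ℤ) : ZMod 2) =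
      ((Nat.choose ((n + k) / 2) k : ℕ) : ZMod 2)) ∧
    (k % 2 ≠ n % 2 → (Chebyshev.S ℤ (n : ℤ)).coeff k = 0) := by
  induction n using Nat.twoStepInduction with
  | zero =>
    intro k
    rcases Nat.eq_zero_or_pos k with rfl | hk
    · simp
    · have h : k / 2 < k := by omega
      simp [coeff_one, Nat.choose_eq_zero_of_lt h, hk.ne']
  | one =>
    intro k
    by_cases hk : k = 1
    · subst hk; simp
    · refine ⟨fun hp => ?_, fun _ => by simp [coeff_X, Ne.symm hk]⟩
      have h : (1 + k) / 2 < k := by omega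
      simp [coeff_X, Nat.choose_eq_zero_of_lt h, Ne.symm hk]
  | more n ih0 ih1 =>
    have hrec : Chebyshev.S ℤ ((n + 2 : ℕ) : ℤ) =
        X * Chebyshev.S ℤ ((n + 1 : ℕ) : ℤ) - Chebyshev.S ℤ (n : ℤ) := by
      push_cast
      exact Chebyshev.S_add_two ℤ n
    intro k
    rw [hrec]
    cases k with
    | zero =>
      refine ⟨fun hp => ?_, fun hp => ?_⟩
      · have h := (ih0 0).1 (by omega)
        simp only [coeff_sub, mul_coeff_zero, coeff_X_zero, zero_mul, zero_sub, Int.cast_neg, h,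
          CharTwo.neg_eq, Nat.choose_zero_right]
      · have h := (ih0 0).2 (by omega)
        simp [h]
    | succ k =>
      rw [coeff_sub, coeff_X_mul]
      refine ⟨fun hp => ?_, fun hp => ?_⟩
      · have h0 := (ih0 (k + 1)).1 (by omega)
        have h1 := (ih1 k).1 (by omega)
        have e : (n + 2 + (k + 1)) / 2 = (n + (k + 1)) / 2 + 1 := by omega
        have e' : (n + 1 + k) / 2 = (n + (k + 1)) / 2 := by congr 1; omega
        rw [Int.cast_sub, h0, h1, e, e', Nat.choose_succ_succ, Nat.cast_add, CharTwo.sub_eq_add]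
      · rw [(ih0 (k + 1)).2 (by omega), (ih1 k).2 (by omega), sub_zero]

/-- The coefficient of `X^k` in the scaled Chebyshev polynomial of the second
kind `U_n(X/2)` is an integer `m` which is congruent to `C((n+k)/2, k)` mod 2
when `k ≡ n (mod 2)`, and is `0` when `k ≢ n (mod 2)`. In other words, the
reduction mod 2 of `U_n(X/2)` is `Σ_{0 ≤ k ≤ n, k ≡ n mod 2} C₂((n+k)/2,k) X^k`,
i.e. the reduction mod 2 of `Q_n(X)`. -/
theorem chebyshevU_scaled_coeff_mod_two (n k : ℕ) :
    ∃ m : ℤ,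
      ((Polynomial.Chebyshev.U ℚ (n : ℤ)).comp
          (Polynomial.C (1 / 2 : ℚ) * Polynomial.X)).coeff k = (m : ℚ) ∧
      (k % 2 = n % 2 → (m : ZMod 2) = ((Nat.choose ((n + k) / 2) k : ℕ) : ZMod 2)) ∧
      (k % 2 ≠ n % 2 → m = 0) := by
  refine ⟨(Polynomial.Chebyshev.S ℤ (n : ℤ)).coeff k, ?_, coeff_chebyshevS_mod_two n k⟩
  have hU : (Polynomial.Chebyshev.U ℚ (n : ℤ)).comp
      (Polynomial.C (1 / 2 : ℚ) * Polynomial.X) = Polynomial.Chebyshev.S ℚ n := by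
    rw [← Polynomial.Chebyshev.S_comp_two_mul_X, Polynomial.comp_assoc]
    have h : (2 * Polynomial.X : Polynomial ℚ).comp
        (Polynomial.C (1 / 2 : ℚ) * Polynomial.X) = Polynomial.X := by
      have h2 : (2 : Polynomial ℚ) = Polynomial.C 2 := rfl
      rw [h2, Polynomial.mul_comp, Polynomial.C_comp, Polynomial.X_comp, ← mul_assoc,
        ← Polynomial.C_mul]
      norm_num
    rw [h, Polynomial.comp_X]
  rw [hU, ← Polynomial.Chebyshev.map_S (Int.castRingHom ℚ), Polynomial.coeff_map]
  rfl
end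

section
/- For every n ≥ 0, the number of odd coefficients of the (scaled) Chebyshev polynomial of the second kind U_n(X/2) (all of whose coefficients are integers) equals the Stern-Brocot number u(n). -/
/-!
Write `S n = U_n(X/2)`, which satisfies `S (n+2) = X * S (n+1) - S n` and hence has integer
coefficients; its odd coefficients are the nonzero coefficients of its reduction over `ZMod 2`.
In characteristic two the duplication formulas of the Chebyshev polynomials become
`S (2n+1) = X * (S n)^2` and `S (2n+2) = (S (n+1))^2 + (S n)^2`, and squaring over `ZMod 2` is the
substitution `X ↦ X^2`, which preserves the number of nonzero coefficients. Since `S n` involves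
only monomials whose degree has the parity of `n`, no cancellation occurs in the sum, so the
number of nonzero coefficients satisfies the Stern-Brocot recursion.
-/

open Polynomial in
/-- Duplication formulas for `U_n(X/2)` in characteristic two. -/
lemma S_two_mul_zmod_two (n : ℕ) :
    Chebyshev.S (ZMod 2) ((2 * n + 1 : ℕ) : ℤ) = X * Chebyshev.S (ZMod 2) n ^ 2 ∧
    Chebyshev.S (ZMod 2) ((2 * n + 2 : ℕ) : ℤ) =
      Chebyshev.S (ZMod 2) ((n + 1 : ℕ) : ℤ) ^ 2 + Chebyshev.S (ZMod 2) n ^ 2 := by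
  have h2 : (2 : (ZMod 2)[X]) = 0 := CharTwo.two_eq_zero
  have hrec (m : ℕ) : Chebyshev.S (ZMod 2) ((m + 2 : ℕ) : ℤ) =
      X * Chebyshev.S (ZMod 2) ((m + 1 : ℕ) : ℤ) - Chebyshev.S (ZMod 2) m := by
    simp
  induction n with
  | zero =>
    have h := hrec 0
    simp only [zero_add, Nat.cast_one, Nat.cast_zero, Chebyshev.S_one, Chebyshev.S_zero] at h
    simp only [mul_zero, zero_add, Nat.cast_one, Nat.cast_zero, Chebyshev.S_one,
      Chebyshev.S_zero, h]
    constructor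
    · ring
    · linear_combination (-1 : (ZMod 2)[X]) * h2
  | succ n ih =>
    obtain ⟨ih1, ih2⟩ := ih
    have e1 := hrec (2 * n + 1)
    have e2 := hrec (2 * n + 2)
    have e3 := hrec n
    rw [show 2 * n + 1 + 1 = 2 * n + 2 by ring, ih1, ih2] at e1
    rw [show 2 * n + 2 + 1 = 2 * n + 1 + 2 by ring, e1, ih2] at e2
    rw [show 2 * (n + 1) + 1 = 2 * n + 1 + 2 by ring,
      show 2 * (n + 1) + 2 = 2 * n + 2 + 2 by ring, show n + 1 + 1 = n + 2 by ring, e1, e2, e3]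
    generalize Chebyshev.S (ZMod 2) ((n + 1 : ℕ) : ℤ) = a
    generalize Chebyshev.S (ZMod 2) (n : ℤ) = b
    constructor
    · ring
    · linear_combination (X * a * b - a ^ 2 - b ^ 2) * h2

open Polynomial in
/-- `U_n(X/2)` has the parity of `n`. -/
lemma S_coeff_eq_zero_of_odd_add (n : ℕ) : ∀ k, Odd (n + k) →
    (Chebyshev.S (ZMod 2) n).coeff k = 0 := by
  induction n using Nat.twoStepInduction with
  | zero =>
    intro k hk
    have : k ≠ 0 := by rintro rfl; simp at hk
    simp [coeff_one, this]
  | one =>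
    intro k hk
    have : 1 ≠ k := by rintro rfl; exact absurd hk (by decide)
    simp [coeff_X, this]
  | more n ih1 ih2 =>
    intro k hk
    have e : Chebyshev.S (ZMod 2) ((n + 2 : ℕ) : ℤ) =
        X * Chebyshev.S (ZMod 2) ((n + 1 : ℕ) : ℤ) - Chebyshev.S (ZMod 2) n := by
      simp
    rw [e, coeff_sub, ih1 k (by grind), sub_zero]
    cases k with
    | zero => simp
    | succ k => rw [coeff_X_mul, ih2 k (by grind)]

open Polynomial in
/-- Squaring over `ZMod 2` preserves the number of nonzero coefficients, because it is the
substitution `X ↦ X ^ 2`. -/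
lemma card_support_sq_zmod_two (p : (ZMod 2)[X]) : (p ^ 2).support.card = p.support.card := by
  rw [← ZMod.expand_card]
  have : (expand (ZMod 2) 2 p).support = p.support.image (2 * ·) := by
    ext k
    simp only [mem_support_iff, coeff_expand two_pos, Finset.mem_image]
    grind
  rw [this, Finset.card_image_of_injective _ (fun a b h => by simpa using h)]

open Polynomial in
lemma card_support_X_mul_zmod_two (p : (ZMod 2)[X]) :
    (X * p).support.card = p.support.card := by
  have : (X * p).support = p.support.image Nat.succ := by
    ext k
    cases k <;> simp
  rw [this, Finset.card_image_of_injective _ Nat.succ_injective]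

open Polynomial in
lemma card_support_S_two_mul_add_two (n : ℕ) :
    (Chebyshev.S (ZMod 2) ((2 * n + 2 : ℕ) : ℤ)).support.card =
      (Chebyshev.S (ZMod 2) ((n + 1 : ℕ) : ℤ)).support.card +
        (Chebyshev.S (ZMod 2) n).support.card := by
  have hd : Disjoint (Chebyshev.S (ZMod 2) ((n + 1 : ℕ) : ℤ)).support
      (Chebyshev.S (ZMod 2) n).support := by
    rw [Finset.disjoint_left]
    intro k h1 h2
    rw [mem_support_iff] at h1 h2
    rcases Nat.even_or_odd (n + k) with h | h
    · exact h1 (S_coeff_eq_zero_of_odd_add _ k (by grind))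
    · exact h2 (S_coeff_eq_zero_of_odd_add _ k h)
  rw [(S_two_mul_zmod_two n).2, ← CharTwo.add_sq, card_support_sq_zmod_two,
    ← Finset.card_union_of_disjoint hd]
  congr 1
  ext k
  have hk : k ∈ (Chebyshev.S (ZMod 2) ((n + 1 : ℕ) : ℤ)).support →
      k ∉ (Chebyshev.S (ZMod 2) n).support := fun h => Finset.disjoint_left.1 hd h
  simp only [mem_support_iff, coeff_add, Finset.mem_union] at hk ⊢
  grind

open Polynomial in
/-- Over `ℚ`, `U_n(X/2)` is the image of the integer polynomial `S n`, and the positions of its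
odd coefficients form the support of the reduction of `S n` modulo two. -/
lemma setOf_odd_coeff_eq_support (n : ℕ) :
    {k : ℕ | ∃ m : ℤ, Odd m ∧
        ((Chebyshev.U ℚ (n : ℤ)).comp (C (1 / 2 : ℚ) * X)).coeff k = (m : ℚ)} =
      ((Chebyshev.S (ZMod 2) n).support : Set ℕ) := by
  have hS : (Chebyshev.U ℚ (n : ℤ)).comp (C (1 / 2 : ℚ) * X) =
      (Chebyshev.S ℤ n).map (Int.castRingHom ℚ) := by
    rw [Chebyshev.map_S, ← Chebyshev.S_comp_two_mul_X, comp_assoc]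
    have : ((2 : ℚ[X]) * X).comp (C (1 / 2 : ℚ) * X) = X := by
      rw [show (2 : ℚ[X]) = C 2 from rfl, mul_comp, C_comp, X_comp, ← mul_assoc, ← C_mul]
      norm_num
    rw [this, comp_X]
  ext k
  rw [hS, ← Chebyshev.map_S (Int.castRingHom (ZMod 2))]
  simp only [coeff_map, eq_intCast, Int.cast_inj, Set.mem_ofPred_eq, SetLike.mem_coe,
    mem_support_iff, exists_eq_right', ne_eq, ZMod.intCast_zmod_eq_zero_iff_dvd]
  rw [← Int.not_even_iff_odd, even_iff_two_dvd]
  rfl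


/-- The number of odd coefficients of the scaled Chebyshev polynomial of the
second kind `U_n(X/2)` (all of whose coefficients are integers) equals the
Stern-Brocot number `u n`. -/
theorem card_odd_coeffs_chebyshevU_eq_stern
    (u : ℕ → ℕ) (h0 : u 0 = 1) (h1 : u 1 = 1)
    (heven : ∀ n : ℕ, 1 ≤ n → u (2 * n) = u n + u (n - 1))
    (hodd : ∀ n : ℕ, 1 ≤ n → u (2 * n + 1) = u n) :
    ∀ n : ℕ,
      Set.ncard {k : ℕ | ∃ m : ℤ, Odd m ∧
        ((Polynomial.Chebyshev.U ℚ (n : ℤ)).comp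
          (Polynomial.C (1 / 2 : ℚ) * Polynomial.X)).coeff k = (m : ℚ)} = u n := by

  intro n
  rw [setOf_odd_coeff_eq_support, Set.ncard_coe_finset]
  induction n using Nat.strong_induction_on with
  | _ n ih =>
    rcases Nat.even_or_odd' n with ⟨m, rfl | rfl⟩
    · cases m with
      | zero => simpa [h0] using
          congrArg Finset.card (Polynomial.support_C_mul_X_pow 0 (one_ne_zero (α := ZMod 2)))
      | succ m =>
        rw [heven _ (by omega), Nat.add_sub_cancel, ← ih (m + 1) (by omega), ← ih m (by omega)]
        exact card_support_S_two_mul_add_two m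
    · have hm : u (2 * m + 1) = u m := by
        rcases Nat.eq_zero_or_pos m with rfl | h
        · simp [h0, h1]
        · exact hodd m h
      rw [hm, ← ih m (by omega), (S_two_mul_zmod_two m).1, card_support_X_mul_zmod_two,
        card_support_sq_zmod_two]
end

section
/- Let ω be a 2-adic integer. The sequence j ↦ (ω + 2^j choose 2^{j+1})₂ of elements of {0,1} is ultimately periodic if and only if ω is rational, i.e., if and only if there exist integers a, b with b ≠ 0 such that b·ω = a in ℤ₂. -/
/-!
Adding `2 ^ j` to `ω` leaves the digits below `j` unchanged and carries into position `j + 1`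
exactly when `d_j(ω) = 1`, so `(ω + 2 ^ j choose 2 ^ (j + 1))₂ = d_j(ω) + d_{j+1}(ω) mod 2`
(`binom2_add_two_pow`). If this sequence has eventual period `p`, then `d_{j+p} + d_j mod 2` is
eventually constant, so the digits have eventual period `2 p`; conversely a period of the digits
is a period of the sequence.

It remains to see that the digits are ultimately periodic iff `ω` is rational. Write `A_n` for the
truncation `ω.appr n`. If the digits have period `p` from `N` on, then `A_{N+p+m} - 2 ^ p A_{N+m}`
does not depend on `m`, and the limit `m → ∞` gives `(1 - 2 ^ p) ω ∈ ℤ`. Conversely let `b ω = a`,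
and let `w_n` be the tail of `ω`, so that `ω = A_n + 2 ^ n w_n`. Then `b w_n` is an integer of
absolute value at most `|a| + |b|`; by pigeonhole two tails agree, and a tail determines all later
digits.
-/

/-- The `j`-th binary digit `d_j(ω)` of a 2-adic integer `ω`: the `j`-th
binary digit of the canonical approximation of `ω` modulo `2^(j+1)`, so that
`ω ≡ Σ_{i ≤ j} d_i(ω)·2^i (mod 2^{j+1})` for all `j`. -/
noncomputable def padicDigit (ω : ℤ_[2]) (j : ℕ) : ℕ :=
  if (ω.appr (j + 1)).testBit j then 1 else 0

/-- The generalized binomial coefficient `(ω choose k)₂ = Π_{i≥0} C(d_i(ω), k_i)`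
for `ω ∈ ℤ₂` and `k ∈ ℕ` with binary digits `k_i`; it equals `1` if `k_i ≤ d_i(ω)`
for all `i`, and `0` otherwise.  (All binary digits of `k` with index `> k`
vanish, so the product may be truncated at `i = k`.) -/
noncomputable def binom2 (ω : ℤ_[2]) (k : ℕ) : ℕ :=
  ∏ i ∈ Finset.range (k + 1),
    Nat.choose (padicDigit ω i) (if k.testBit i then 1 else 0)

/-! ### Truncations and digits -/

theorem padicDigit_le_one (ω : ℤ_[2]) (j : ℕ) : padicDigit ω j ≤ 1 := by
  unfold padicDigit; split <;> simp

theorem appr_lt_two_pow (ω : ℤ_[2]) (n : ℕ) : ω.appr n < 2 ^ n := PadicInt.appr_lt ω n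

theorem two_pow_dvd_sub_appr (ω : ℤ_[2]) (n : ℕ) : (2 : ℤ_[2]) ^ n ∣ ω - (ω.appr n : ℤ_[2]) := by
  have h := PadicInt.appr_spec n ω
  rw [Ideal.mem_span_singleton] at h
  exact_mod_cast h

theorem two_pow_dvd_intCast (n : ℕ) (z : ℤ) :
    (2 : ℤ_[2]) ^ n ∣ (z : ℤ_[2]) ↔ (2 : ℤ) ^ n ∣ z := by
  have h := PadicInt.norm_int_le_pow_iff_dvd (p := 2) (k := z) (n := n)
  have h' := PadicInt.norm_le_pow_iff_mem_span_pow (p := 2) (z : ℤ_[2]) n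
  rw [Ideal.mem_span_singleton] at h'
  exact_mod_cast h'.symm.trans h

/-- The truncation is the only residue in `[0, 2 ^ n)` congruent to `ω`. -/
theorem appr_eq_of_dvd {ω : ℤ_[2]} {n a : ℕ} (ha : a < 2 ^ n)
    (h : (2 : ℤ_[2]) ^ n ∣ ω - (a : ℤ_[2])) : ω.appr n = a := by
  have h1 := dvd_sub h (two_pow_dvd_sub_appr ω n)
  have h2 : (2 : ℤ) ^ n ∣ (ω.appr n : ℤ) - a := by
    rw [← two_pow_dvd_intCast]
    convert h1 using 1
    push_cast
    ring
  have h3 : a ≡ ω.appr n [MOD 2 ^ n] := by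
    rw [Nat.modEq_iff_dvd]
    exact_mod_cast h2
  exact (Nat.ModEq.eq_of_lt_of_lt h3 ha (appr_lt_two_pow ω n)).symm

theorem testBit_add_two_pow_mul {a j d : ℕ} (ha : a < 2 ^ j) (hd : d ≤ 1) :
    (if (a + 2 ^ j * d).testBit j then 1 else 0) = d := by
  rw [add_comm, Nat.testBit_two_pow_mul_add d ha]
  interval_cases d <;> simp

/-- Consecutive truncations differ by the digit: `A_{j+1} = A_j + 2 ^ j d_j`. -/
theorem appr_succ_eq (ω : ℤ_[2]) (j : ℕ) :
    ω.appr (j + 1) = ω.appr j + 2 ^ j * padicDigit ω j := by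
  have hlt := appr_lt_two_pow ω (j + 1)
  have hmod : ω.appr j = ω.appr (j + 1) % 2 ^ j := by
    apply appr_eq_of_dvd (Nat.mod_lt _ (by positivity))
    have h1 : (2 : ℤ_[2]) ^ j ∣ ω - (ω.appr (j + 1) : ℤ_[2]) :=
      (pow_dvd_pow _ (Nat.le_succ j)).trans (two_pow_dvd_sub_appr ω (j + 1))
    have h2 : (ω.appr (j + 1) : ℤ_[2])
        = ((ω.appr (j + 1) % 2 ^ j : ℕ) : ℤ_[2])
          + 2 ^ j * ((ω.appr (j + 1) / 2 ^ j : ℕ) : ℤ_[2]) := by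
      exact_mod_cast (Nat.mod_add_div _ _).symm
    have h3 := dvd_add h1 (Dvd.intro ((ω.appr (j + 1) / 2 ^ j : ℕ) : ℤ_[2]) rfl)
    convert h3 using 1
    linear_combination h2
  have hq : ω.appr (j + 1) / 2 ^ j ≤ 1 := by
    have : ω.appr (j + 1) / 2 ^ j < 2 := by
      rw [Nat.div_lt_iff_lt_mul (by positivity)]
      rw [pow_succ] at hlt
      omega
    omega
  have hdec := Nat.mod_add_div (ω.appr (j + 1)) (2 ^ j)
  have hd : padicDigit ω j = ω.appr (j + 1) / 2 ^ j := by
    unfold padicDigit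
    conv_lhs => rw [← hdec]
    exact testBit_add_two_pow_mul (Nat.mod_lt _ (by positivity)) hq
  rw [hd, hmod]
  exact hdec.symm

/-! ### The binomial sequence in terms of digits -/

theorem binom2_two_pow (ω : ℤ_[2]) (n : ℕ) : binom2 ω (2 ^ n) = padicDigit ω n := by
  unfold binom2
  rw [Finset.prod_eq_single n]
  · simp
  · intro i _ hi
    simp [hi.symm]
  · intro h
    have := Nat.lt_two_pow_self (n := n)
    simp at h
    omega

/-- Adding `2 ^ j` flips the digit at `j + 1` exactly when there is a carry out of position `j`,
that is, when `d_j(ω) = 1`. -/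
theorem binom2_add_two_pow (ω : ℤ_[2]) (j : ℕ) :
    binom2 (ω + 2 ^ j) (2 ^ (j + 1)) = (padicDigit ω j + padicDigit ω (j + 1)) % 2 := by
  rw [binom2_two_pow]
  have h1 := appr_succ_eq ω j
  have h2 := appr_succ_eq ω (j + 1)
  have ha := appr_lt_two_pow ω j
  have hd := padicDigit_le_one ω j
  have he := padicDigit_le_one ω (j + 1)
  have hs := two_pow_dvd_sub_appr ω (j + 1 + 1)
  -- The digits of `ω + 2 ^ j` at `j` and `j + 1`, with the carry out of `j + 1` discarded.
  have key : (ω + 2 ^ j).appr (j + 1 + 1) = ω.appr j + 2 ^ j * ((padicDigit ω j + 1) % 2)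
      + 2 ^ (j + 1) * ((padicDigit ω j + padicDigit ω (j + 1)) % 2) := by
    rw [h2, h1] at hs
    obtain ⟨c, hc⟩ := hs
    generalize padicDigit ω j = d at *
    generalize padicDigit ω (j + 1) = e at *
    apply appr_eq_of_dvd
    · rw [pow_succ, pow_succ]
      interval_cases d <;> interval_cases e <;> simp <;> omega
    · interval_cases d <;> interval_cases e <;> push_cast at hc ⊢
      · exact ⟨c, by linear_combination hc⟩
      · exact ⟨c, by linear_combination hc⟩
      · exact ⟨c, by linear_combination hc⟩
      · exact ⟨c + 1, by linear_combination hc⟩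
  unfold padicDigit at key ⊢
  rw [key]
  apply testBit_add_two_pow_mul
  · have : ((if (ω.appr (j + 1)).testBit j then 1 else 0) + 1) % 2 ≤ 1 := by omega
    rw [pow_succ]
    nlinarith
  · omega

/-! ### Periodic digits and rationality -/

theorem two_pow_dvd_eq_zero {x : ℤ_[2]} (h : ∀ m : ℕ, (2 : ℤ_[2]) ^ m ∣ x) : x = 0 := by
  by_contra hx
  have h1 := (PadicInt.norm_le_pow_iff_mem_span_pow (p := 2) x (x.valuation + 1)).2 (by
    rw [Ideal.mem_span_singleton]; exact_mod_cast h _)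
  rw [PadicInt.norm_le_pow_iff_le_valuation x hx] at h1
  omega

theorem rational_of_digits_periodic {ω : ℤ_[2]} {p N : ℕ} (hp : 1 ≤ p)
    (h : ∀ j, N ≤ j → padicDigit ω (j + p) = padicDigit ω j) :
    ∃ a b : ℤ, b ≠ 0 ∧ (b : ℤ_[2]) * ω = (a : ℤ_[2]) := by
  have hconst : ∀ m : ℕ, (ω.appr (N + m + p) : ℤ) - 2 ^ p * ω.appr (N + m)
      = ω.appr (N + p) - 2 ^ p * ω.appr N := by
    intro m
    induction m with
    | zero => rfl
    | succ m ih =>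
      rw [← ih, show N + (m + 1) + p = (N + m + p) + 1 by ring, ← add_assoc, appr_succ_eq,
        appr_succ_eq, h (N + m) (by omega)]
      push_cast
      ring
  refine ⟨ω.appr (N + p) - 2 ^ p * ω.appr N, 1 - 2 ^ p, ?_, ?_⟩
  · have : (2 : ℤ) ^ 1 ≤ 2 ^ p := pow_le_pow_right₀ (by norm_num) hp
    omega
  · rw [← sub_eq_zero]
    apply two_pow_dvd_eq_zero
    intro m
    have h1 : (2 : ℤ_[2]) ^ m ∣ ω - (ω.appr (N + m + p) : ℤ_[2]) :=
      (pow_dvd_pow _ (by omega)).trans (two_pow_dvd_sub_appr ω _)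
    have h2 : (2 : ℤ_[2]) ^ m ∣ ω - (ω.appr (N + m) : ℤ_[2]) :=
      (pow_dvd_pow _ (by omega)).trans (two_pow_dvd_sub_appr ω _)
    have h3 := dvd_sub h1 (h2.mul_left (2 ^ p))
    rw [← hconst m]
    convert h3 using 1
    push_cast
    ring

/-- A 2-adic integer determines its lowest digit and the remaining tail. -/
theorem digit_add_two_mul_inj {d e : ℕ} (hd : d ≤ 1) (he : e ≤ 1) {x y : ℤ_[2]}
    (h : (d : ℤ_[2]) + 2 * x = e + 2 * y) : d = e ∧ x = y := by
  have hde : d = e := by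
    have h1 : (2 : ℤ_[2]) ^ 1 ∣ (((d : ℤ) - e : ℤ) : ℤ_[2]) :=
      ⟨y - x, by push_cast; linear_combination h⟩
    rw [two_pow_dvd_intCast] at h1
    omega
  refine ⟨hde, ?_⟩
  subst hde
  exact mul_left_cancel₀ two_ne_zero (add_left_cancel h)

theorem digits_periodic_of_rational {ω : ℤ_[2]} {a b : ℤ} (hb : b ≠ 0)
    (h : (b : ℤ_[2]) * ω = (a : ℤ_[2])) :
    ∃ p : ℕ, 1 ≤ p ∧ ∃ N : ℕ, ∀ j, N ≤ j → padicDigit ω (j + p) = padicDigit ω j := by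
  choose w hw using two_pow_dvd_sub_appr ω
  have hrec : ∀ n, w n = padicDigit ω n + 2 * w (n + 1) := by
    intro n
    have h1 := hw n
    have h2 := hw (n + 1)
    rw [appr_succ_eq] at h2
    push_cast at h2
    apply mul_left_cancel₀ (pow_ne_zero n (two_ne_zero (α := ℤ_[2])))
    linear_combination h2 - h1
  have hr : ∀ n, ∃ r : ℤ, a - b * ω.appr n = 2 ^ n * r := by
    intro n
    change (2 : ℤ) ^ n ∣ _
    rw [← two_pow_dvd_intCast]
    exact ⟨b * w n, by push_cast; linear_combination (b : ℤ_[2]) * hw n - h⟩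
  choose r hr using hr
  have hbw : ∀ n, (b : ℤ_[2]) * w n = r n := by
    intro n
    apply mul_left_cancel₀ (pow_ne_zero n (two_ne_zero (α := ℤ_[2])))
    have h1 : (a : ℤ_[2]) - b * ω.appr n = 2 ^ n * r n := by exact_mod_cast congrArg (Int.cast : ℤ → ℤ_[2]) (hr n)
    linear_combination h1 + h - (b : ℤ_[2]) * hw n
  have hbound : ∀ n, r n ∈ Set.Icc (-(|a| + |b|)) (|a| + |b|) := by
    intro n
    rw [Set.mem_Icc, ← abs_le]
    have hpos : (0 : ℤ) < 2 ^ n := by positivity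
    have hA : (ω.appr n : ℤ) ≤ 2 ^ n := by exact_mod_cast (appr_lt_two_pow ω n).le
    have h1 : 2 ^ n * |r n| = |a - b * ω.appr n| := by rw [hr n, abs_mul, abs_of_pos hpos]
    have h2 : |a - b * ω.appr n| ≤ |a| + |b| * ω.appr n := by
      have := abs_sub a (b * ω.appr n)
      rwa [abs_mul, Nat.abs_cast] at this
    have h3 := mul_le_mul_of_nonneg_left hA (abs_nonneg b)
    have h4 : |a| * 1 ≤ |a| * 2 ^ n := mul_le_mul_of_nonneg_left (by omega) (abs_nonneg a)
    refine le_of_mul_le_mul_left ?_ hpos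
    linarith
  -- Pigeonhole: the integers `r n = b w_n` lie in a finite interval.
  obtain ⟨m, n, hmn, hrmn⟩ : ∃ m n, m < n ∧ r m = r n := by
    obtain ⟨m, -, n, -, hlt, heq⟩ := Set.infinite_univ.exists_lt_map_eq_of_mapsTo
      (fun n _ => hbound n) (Set.finite_Icc _ _)
    exact ⟨m, n, hlt, heq⟩
  refine ⟨n - m, by omega, m, ?_⟩
  have hwk : ∀ k, w (m + k + (n - m)) = w (m + k) := by
    intro k
    induction k with
    | zero =>
      rw [show m + 0 + (n - m) = n by omega, add_zero]
      have hb' : (b : ℤ_[2]) ≠ 0 := by exact_mod_cast hb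
      apply mul_left_cancel₀ hb'
      rw [hbw, hbw, hrmn]
    | succ k ih =>
      rw [hrec, hrec (m + k)] at ih
      have := (digit_add_two_mul_inj (padicDigit_le_one _ _) (padicDigit_le_one _ _) ih).2
      rwa [show m + (k + 1) + (n - m) = m + k + (n - m) + 1 by ring]
  intro j hj
  obtain ⟨k, rfl⟩ := Nat.exists_eq_add_of_le hj
  have ih := hwk k
  rw [hrec, hrec (m + k)] at ih
  exact (digit_add_two_mul_inj (padicDigit_le_one _ _) (padicDigit_le_one _ _) ih).1

/-- The sequence `j ↦ (ω + 2^j choose 2^{j+1})₂` is ultimately periodic if and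
only if `ω` is rational, i.e. `b·ω = a` in `ℤ₂` for some integers `a, b` with
`b ≠ 0`. -/
theorem binom2_seq_ultimately_periodic_iff_rational (ω : ℤ_[2]) :
    (∃ p : ℕ, 1 ≤ p ∧ ∃ N : ℕ, ∀ j : ℕ, N ≤ j →
        binom2 (ω + 2 ^ (j + p)) (2 ^ (j + p + 1))
          = binom2 (ω + 2 ^ j) (2 ^ (j + 1)))
      ↔ ∃ a b : ℤ, b ≠ 0 ∧ (b : ℤ_[2]) * ω = (a : ℤ_[2]) := by
  simp only [binom2_add_two_pow]
  constructor
  · rintro ⟨p, hp, N, h⟩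
    -- The period of `d_j + d_{j+1}` mod 2 makes `d_{j+p} + d_j` mod 2 constant for `j ≥ N`.
    have hconst : ∀ k, (padicDigit ω (N + k + p) + padicDigit ω (N + k)) % 2
        = (padicDigit ω (N + p) + padicDigit ω N) % 2 := by
      intro k
      induction k with
      | zero => rfl
      | succ k ih =>
        have h1 := h (N + k) (by omega)
        rw [show N + (k + 1) + p = N + k + p + 1 by ring, ← add_assoc]
        omega
    refine rational_of_digits_periodic (p := 2 * p) (N := N) (by omega) ?_
    intro j hj
    obtain ⟨k, rfl⟩ := Nat.exists_eq_add_of_le hj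
    have h1 := hconst k
    have h2 := hconst (k + p)
    rw [← add_assoc] at h2
    rw [show N + k + 2 * p = N + k + p + p by ring]
    have h3 := padicDigit_le_one ω (N + k + p + p)
    have h4 := padicDigit_le_one ω (N + k)
    omega
  · rintro ⟨a, b, hb, h⟩
    obtain ⟨p, hp, N, hN⟩ := digits_periodic_of_rational hb h
    refine ⟨p, hp, N, fun j hj => ?_⟩
    have h1 := hN (j + 1) (by omega)
    rw [show j + 1 + p = j + p + 1 by ring] at h1
    rw [hN j hj, h1]
end

section
/- Let ω be a 2-adic integer and k a natural number. If ω + k is even in ℤ₂, i.e., there exists m ∈ ℤ₂ with 2m = ω + k, then (m choose k)₂ = (ω + k + 1 choose 2k+1)₂; if ω + k is odd (no such m exists), then (ω + k + 1 choose 2k+1)₂ = 0. In short, ((ω+k)/2 choose k)₂ = (ω+k+1 choose 2k+1)₂ with the convention that the left side is 0 when (ω+k)/2 is not a 2-adic integer. -/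
theorem appr_eq_of_sub_mem (x : ℤ_[2]) (n a : ℕ) (ha : a < 2 ^ n)
    (h : x - (a : ℤ_[2]) ∈ Ideal.span {(2 : ℤ_[2]) ^ n}) : x.appr n = a := by
  have hc := PadicInt.zmod_congr_of_sub_mem_span n x (x.appr n) a
    (PadicInt.appr_spec n x) (by exact_mod_cast h)
  rw [ZMod.natCast_eq_natCast_iff] at hc
  exact Nat.ModEq.eq_of_lt_of_lt hc (PadicInt.appr_lt x n) ha

theorem appr_two_mul_add_one (m : ℤ_[2]) (n : ℕ) :
    (2 * m + 1).appr (n + 1) = 2 * m.appr n + 1 := by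
  have hlt : m.appr n < 2 ^ n := PadicInt.appr_lt m n
  apply appr_eq_of_sub_mem
  · rw [pow_succ]; omega
  · obtain ⟨c, hc⟩ := Ideal.mem_span_singleton.1 (PadicInt.appr_spec n m)
    refine Ideal.mem_span_singleton.2 ⟨c, ?_⟩
    push_cast at hc ⊢
    linear_combination 2 * hc

theorem padicDigit_two_mul_add_one_succ (m : ℤ_[2]) (j : ℕ) :
    padicDigit (2 * m + 1) (j + 1) = padicDigit m j := by
  unfold padicDigit
  rw [appr_two_mul_add_one, Nat.testBit_succ, show (2 * m.appr (j + 1) + 1) / 2 = m.appr (j + 1) by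
    omega]

theorem padicDigit_two_mul_add_one_zero (m : ℤ_[2]) : padicDigit (2 * m + 1) 0 = 1 := by
  unfold padicDigit
  rw [appr_two_mul_add_one]
  simp

theorem padicDigit_two_mul_zero (m : ℤ_[2]) : padicDigit (2 * m) 0 = 0 := by
  unfold padicDigit
  rw [appr_eq_of_sub_mem (2 * m) (0 + 1) 0 (by norm_num)
    (Ideal.mem_span_singleton.2 ⟨m, by push_cast; ring⟩)]
  simp

theorem binom2_two_mul_add_one (m : ℤ_[2]) (k : ℕ) :
    binom2 (2 * m + 1) (2 * k + 1) = binom2 m k := by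
  unfold binom2
  rw [Finset.prod_range_succ', padicDigit_two_mul_add_one_zero]
  have hbit (i : ℕ) : (2 * k + 1).testBit (i + 1) = k.testBit i := by
    rw [Nat.testBit_succ, show (2 * k + 1) / 2 = k by omega]
  simp only [padicDigit_two_mul_add_one_succ, hbit]
  rw [show (2 * k + 1).testBit 0 = true by simp]
  simp only [if_true, Nat.choose_self, mul_one]
  symm
  apply Finset.prod_subset (Finset.range_subset_range.2 (by omega))
  -- The extra factors, at positions `i > k`, are `C(_, 0) = 1` since `k < 2 ^ i`.
  intro i _ hi
  have hki : k < i := by simpa using hi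
  rw [Nat.testBit_lt_two_pow (hki.trans Nat.lt_two_pow_self)]
  simp

theorem binom2_two_mul_odd (m : ℤ_[2]) (k : ℕ) : binom2 (2 * m) (2 * k + 1) = 0 := by
  unfold binom2
  rw [Finset.prod_range_succ', padicDigit_two_mul_zero]
  simp

theorem exists_two_mul_or (z : ℤ_[2]) : (∃ m, 2 * m = z) ∨ ∃ m, 2 * m = z + 1 := by
  obtain ⟨c, hc⟩ := Ideal.mem_span_singleton.1 (PadicInt.appr_spec 1 z)
  have hlt : z.appr 1 < 2 ^ 1 := PadicInt.appr_lt z 1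
  obtain h | h : z.appr 1 = 0 ∨ z.appr 1 = 1 := by omega
  · rw [h] at hc
    push_cast at hc
    exact Or.inl ⟨c, by linear_combination -hc⟩
  · rw [h] at hc
    push_cast at hc
    exact Or.inr ⟨c + 1, by linear_combination -hc⟩

/-- `((ω+k)/2 choose k)₂ = (ω+k+1 choose 2k+1)₂`: if `ω + k = 2m` in `ℤ₂` then
`(m choose k)₂ = (ω+k+1 choose 2k+1)₂`, while if `ω + k` is odd (no such `m`
exists) then `(ω+k+1 choose 2k+1)₂ = 0`. -/
theorem binom2_half_eq (ω : ℤ_[2]) (k : ℕ) :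
    (∀ m : ℤ_[2], 2 * m = ω + (k : ℤ_[2]) →
        binom2 m k = binom2 (ω + (k : ℤ_[2]) + 1) (2 * k + 1)) ∧
      ((¬ ∃ m : ℤ_[2], 2 * m = ω + (k : ℤ_[2])) →
        binom2 (ω + (k : ℤ_[2]) + 1) (2 * k + 1) = 0) := by
  refine ⟨fun m hm => ?_, fun hno => ?_⟩
  · rw [← hm, binom2_two_mul_add_one]
  · obtain h | ⟨m, hm⟩ := exists_two_mul_or (ω + (k : ℤ_[2]))
    · exact absurd h hno
    · rw [← hm, binom2_two_mul_odd]
end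

section
/- Let ω be a 2-adic integer. The set {k ∈ ℕ : (ω + k + 1 choose 2k+1)₂ = 1} is finite if and only if ω is a rational integer (ω lies in the image of ℤ in ℤ₂). Equivalently, the formal power series Q_ω(X) = Σ_{k≥0} σ(k,ε)·((ω+k)/2 choose k)₂ X^{μ(k,Λ)} is a polynomial if and only if ω ∈ ℤ. -/
namespace BinomSupport

/-- The set of `k` for which the binomial coefficient `(ω + k + 1 choose 2k + 1)₂` equals `1`. -/
def S (ω : ℤ_[2]) : Set ℕ := {k : ℕ | binom2 (ω + (k : ℤ_[2]) + 1) (2 * k + 1) = 1}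

lemma appr_unique (ω : ℤ_[2]) (n a : ℕ) (ha : a < 2 ^ n)
    (h : (2 : ℤ_[2]) ^ n ∣ ω - a) : ω.appr n = a := by
  have h1 : (2 : ℤ_[2]) ^ n ∣ ω - ω.appr n := by
    simpa [Ideal.mem_span_singleton] using PadicInt.appr_spec n ω
  have h2 : (2 : ℤ_[2]) ^ n ∣ (((ω.appr n : ℤ) - (a : ℤ) : ℤ) : ℤ_[2]) := by
    have := dvd_sub h h1
    push_cast
    simpa using this
  have h3 : ((2 : ℕ) : ℤ) ^ n ∣ (ω.appr n : ℤ) - (a : ℤ) :=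
    (PadicInt.pow_p_dvd_int_iff n _).1 (by exact_mod_cast h2)
  have h4 : a ≡ ω.appr n [MOD 2 ^ n] := by
    rw [Nat.modEq_iff_dvd]
    exact_mod_cast h3
  exact (Nat.ModEq.eq_of_lt_of_lt h4 ha (PadicInt.appr_lt ω n)).symm

lemma appr_two_mul_add (x : ℤ_[2]) (b n : ℕ) (hb : b < 2) :
    (2 * x + b).appr (n + 1) = 2 * x.appr n + b := by
  apply appr_unique
  · have := PadicInt.appr_lt x n
    rw [pow_succ]
    omega
  · have h1 : (2 : ℤ_[2]) ^ n ∣ x - x.appr n := by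
      simpa [Ideal.mem_span_singleton] using PadicInt.appr_spec n x
    obtain ⟨c, hc⟩ := h1
    refine ⟨c, ?_⟩
    push_cast
    linear_combination 2 * hc

lemma digit_zero_even (x : ℤ_[2]) : padicDigit (2 * x) 0 = 0 := by
  have := appr_two_mul_add x 0 0 (by norm_num)
  simp only [Nat.cast_zero, add_zero] at this
  simp [padicDigit, this]

lemma digit_zero_odd (x : ℤ_[2]) : padicDigit (2 * x + 1) 0 = 1 := by
  have := appr_two_mul_add x 1 0 (by norm_num)
  simp only [Nat.cast_one] at this
  simp [padicDigit, this, Nat.testBit_zero, Nat.add_mod]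

lemma digit_succ_even (x : ℤ_[2]) (i : ℕ) : padicDigit (2 * x) (i + 1) = padicDigit x i := by
  have := appr_two_mul_add x 0 (i + 1) (by norm_num)
  simp only [Nat.cast_zero, add_zero] at this
  simp [padicDigit, this, Nat.testBit_succ]

lemma digit_succ_odd (x : ℤ_[2]) (i : ℕ) : padicDigit (2 * x + 1) (i + 1) = padicDigit x i := by
  have := appr_two_mul_add x 1 (i + 1) (by norm_num)
  simp only [Nat.cast_one] at this
  have h : (2 * x.appr (i + 1) + 1) / 2 = x.appr (i + 1) := by omega
  simp [padicDigit, this, Nat.testBit_succ, h]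

lemma binom2_eq_one_iff (ω : ℤ_[2]) (k : ℕ) :
    binom2 ω k = 1 ↔ ∀ i, k.testBit i = true → padicDigit ω i = 1 := by
  have hd : ∀ i, padicDigit ω i = 0 ∨ padicDigit ω i = 1 := by
    intro i
    unfold padicDigit
    split <;> simp
  unfold binom2
  constructor
  · intro h i hi
    have hik : i ∈ Finset.range (k + 1) := by
      by_contra hn
      have hlt : k < 2 ^ i := lt_of_lt_of_le (Nat.lt_two_pow_self)
        (Nat.pow_le_pow_right (by norm_num) (by simp at hn; omega))
      rw [Nat.testBit_lt_two_pow hlt] at hi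
      simp at hi
    rcases hd i with h0 | h1
    · rw [Finset.prod_eq_zero hik (by simp [h0, hi])] at h
      simp at h
    · exact h1
  · intro h
    apply Finset.prod_eq_one
    intro i _
    by_cases hi : k.testBit i = true
    · simp [hi, h i hi]
    · simp [hi]

lemma forall_nat {p : ℕ → Prop} : (∀ i, p i) ↔ p 0 ∧ ∀ i, p (i + 1) :=
  ⟨fun h => ⟨h 0, fun i => h _⟩, fun h i => by cases i; exacts [h.1, h.2 _]⟩

lemma testBit_even_succ (k i : ℕ) : (2 * k).testBit (i + 1) = k.testBit i := by
  simp [Nat.testBit_succ]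

lemma testBit_odd_succ (k i : ℕ) : (2 * k + 1).testBit (i + 1) = k.testBit i := by
  have h : (2 * k + 1) / 2 = k := by omega
  simp [Nat.testBit_succ, h]

lemma binom2_even_even (x : ℤ_[2]) (k : ℕ) :
    binom2 (2 * x) (2 * k) = 1 ↔ binom2 x k = 1 := by
  rw [binom2_eq_one_iff, binom2_eq_one_iff, forall_nat]
  simp only [testBit_even_succ, digit_succ_even]
  simp

lemma binom2_odd_even (x : ℤ_[2]) (k : ℕ) :
    binom2 (2 * x + 1) (2 * k) = 1 ↔ binom2 x k = 1 := by
  rw [binom2_eq_one_iff, binom2_eq_one_iff, forall_nat]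
  simp only [testBit_even_succ, digit_succ_odd]
  simp

lemma binom2_odd_odd (x : ℤ_[2]) (k : ℕ) :
    binom2 (2 * x + 1) (2 * k + 1) = 1 ↔ binom2 x k = 1 := by
  rw [binom2_eq_one_iff, binom2_eq_one_iff, forall_nat]
  simp only [testBit_odd_succ, digit_succ_odd, digit_zero_odd]
  simp

lemma binom2_even_odd (x : ℤ_[2]) (k : ℕ) : binom2 (2 * x) (2 * k + 1) ≠ 1 := by
  rw [Ne, binom2_eq_one_iff, forall_nat, digit_zero_even]
  simp [Nat.testBit_zero, Nat.add_mod]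

lemma exists_half (x : ℤ_[2]) : ∃ y, x = 2 * y ∨ x = 2 * y + 1 := by
  have h1 : (2 : ℤ_[2]) ∣ x - x.appr 1 := by
    simpa [Ideal.mem_span_singleton] using PadicInt.appr_spec 1 x
  have h2 : x.appr 1 < 2 := by simpa using PadicInt.appr_lt x 1
  obtain ⟨c, hc⟩ := h1
  refine ⟨c, ?_⟩
  have h3 : x.appr 1 = 0 ∨ x.appr 1 = 1 := by omega
  rcases h3 with h | h <;> rw [h] at hc
  · left
    push_cast at hc
    linear_combination hc
  · right
    push_cast at hc
    linear_combination hc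

lemma mem_odd_odd (x : ℤ_[2]) (k : ℕ) : 2 * k + 1 ∈ S (2 * x + 1) ↔ k ∈ S x := by
  simp only [S, Set.mem_ofPred_eq]
  rw [← binom2_odd_odd (x + k + 1)]
  have : (2 * x + 1 + ((2 * k + 1 : ℕ) : ℤ_[2]) + 1) = 2 * (x + k + 1) + 1 := by
    push_cast; ring
  rw [this]

lemma not_mem_odd_even (x : ℤ_[2]) (k : ℕ) : 2 * k ∉ S (2 * x + 1) := by
  simp only [S, Set.mem_ofPred_eq]
  have : (2 * x + 1 + ((2 * k : ℕ) : ℤ_[2]) + 1) = 2 * (x + k + 1) := by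
    push_cast; ring
  rw [this]
  exact binom2_even_odd _ _

lemma not_mem_even_odd (x : ℤ_[2]) (k : ℕ) : 2 * k + 1 ∉ S (2 * x) := by
  simp only [S, Set.mem_ofPred_eq]
  have : (2 * x + ((2 * k + 1 : ℕ) : ℤ_[2]) + 1) = 2 * (x + k + 1) := by
    push_cast; ring
  rw [this]
  exact binom2_even_odd _ _

/-- The parity of `x + k` decides which of the two alternatives can hold. -/
lemma mem_even_even (x : ℤ_[2]) (k : ℕ) : 2 * k ∈ S (2 * x) ↔ k ∈ S x ∨ k ∈ S (x - 1) := by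
  have e : (2 * x + ((2 * k : ℕ) : ℤ_[2]) + 1) = 2 * (x + k) + 1 := by
    push_cast; ring
  have e' : x - 1 + (k : ℤ_[2]) + 1 = x + k := by ring
  simp only [S, Set.mem_ofPred_eq]
  rw [e, e', binom2_odd_odd]
  obtain ⟨y, hy | hy⟩ := exists_half (x + k)
  · simp only [hy, binom2_even_even, binom2_odd_odd, binom2_even_odd, or_false]
  · have : 2 * y + 1 + 1 = 2 * (y + 1) := by ring
    simp only [hy, this, binom2_odd_even, binom2_odd_odd, binom2_even_odd, false_or]

/-- For nonnegative `a` the first alternative is the one that occurs, for negative `a` the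
second. -/
lemma le_of_mem (k : ℕ) : ∀ a : ℤ, k ∈ S (a : ℤ_[2]) → (k : ℤ) ≤ a ∨ (k : ℤ) ≤ -a - 2 := by
  induction k using Nat.strong_induction_on with
  | _ k ih =>
    intro a h
    rcases Int.even_or_odd' a with ⟨x, rfl | rfl⟩
    · rcases Nat.even_or_odd' k with ⟨j, rfl | rfl⟩
      · rcases Nat.eq_zero_or_pos j with rfl | hj
        · push_cast
          omega
        · push_cast at h
          rw [mem_even_even] at h
          rcases h with h | h
          · have := ih j (by omega) x h
            push_cast
            omega
          · have := ih j (by omega) (x - 1) (by push_cast; exact h)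
            push_cast
            omega
      · push_cast at h
        exact absurd h (not_mem_even_odd _ _)
    · push_cast at h
      rcases Nat.even_or_odd' k with ⟨j, rfl | rfl⟩
      · exact absurd h (not_mem_odd_even _ _)
      · rw [mem_odd_odd] at h
        have := ih j (by omega) x h
        push_cast
        omega

lemma zero_mem_even (x : ℤ_[2]) : 0 ∈ S (2 * x) := by
  simp only [S, Set.mem_ofPred_eq, Nat.cast_zero, add_zero]
  rw [binom2_odd_odd, binom2_eq_one_iff]
  simp

lemma exists_mem_of_not_dvd (n : ℕ) : ∀ ω : ℤ_[2], ¬ (2 : ℤ_[2]) ^ n ∣ ω + 1 → ∃ k, k ∈ S ω := by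
  induction n with
  | zero => intro ω h; simp at h
  | succ n ih =>
    intro ω h
    obtain ⟨x, rfl | rfl⟩ := exists_half ω
    · exact ⟨0, zero_mem_even x⟩
    · obtain ⟨k, hk⟩ := ih x (fun ⟨c, hc⟩ => h ⟨c, by linear_combination 2 * hc⟩)
      exact ⟨2 * k + 1, (mem_odd_odd x k).2 hk⟩

lemma exists_not_dvd {z : ℤ_[2]} (hz : z ≠ 0) : ∃ n : ℕ, ¬ (2 : ℤ_[2]) ^ n ∣ z := by
  have h2 : Prime (2 : ℤ_[2]) := by exact_mod_cast (PadicInt.prime_p (p := 2))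
  obtain ⟨n, hn⟩ := FiniteMultiplicity.of_not_isUnit h2.not_isUnit hz
  exact ⟨n + 1, hn⟩

lemma exists_ge_mem (N : ℕ) : ∀ ω : ℤ_[2], (¬ ∃ a : ℤ, ω = a) → ∃ k ∈ S ω, N ≤ k := by
  induction N with
  | zero =>
    intro ω h
    have hz : ω + 1 ≠ 0 := fun h0 => h ⟨-1, by push_cast; linear_combination h0⟩
    obtain ⟨n, hn⟩ := exists_not_dvd hz
    obtain ⟨k, hk⟩ := exists_mem_of_not_dvd n ω hn
    exact ⟨k, hk, Nat.zero_le k⟩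
  | succ N ih =>
    intro ω h
    obtain ⟨x, rfl | rfl⟩ := exists_half ω
    · obtain ⟨y, rfl | rfl⟩ := exists_half x
      -- The odd successor of `4y` is `2y - 1 = 2(y - 1) + 1`.
      · obtain ⟨k, hk, hN⟩ := ih (y - 1) (fun ⟨a, ha⟩ => h ⟨4 * (a + 1), by
          push_cast; linear_combination 4 * ha⟩)
        refine ⟨2 * (2 * k + 1), (mem_even_even _ _).2 (Or.inr ?_), by omega⟩
        have e : 2 * y - 1 = 2 * (y - 1) + 1 := by ring
        rw [e]
        exact (mem_odd_odd _ _).2 hk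
      · obtain ⟨k, hk, hN⟩ := ih y (fun ⟨a, ha⟩ => h ⟨4 * a + 2, by
          push_cast; linear_combination 4 * ha⟩)
        exact ⟨2 * (2 * k + 1), (mem_even_even _ _).2 (Or.inl ((mem_odd_odd _ _).2 hk)), by omega⟩
    · obtain ⟨k, hk, hN⟩ := ih x (fun ⟨a, ha⟩ => h ⟨2 * a + 1, by
        push_cast; linear_combination 2 * ha⟩)
      exact ⟨2 * k + 1, (mem_odd_odd _ _).2 hk, by omega⟩

end BinomSupport

/-- The set `{k ∈ ℕ : (ω+k+1 choose 2k+1)₂ = 1}` is finite if and only if `ω`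
is a rational integer.  Equivalently, the power series `Q_ω(X)` (whose nonzero
coefficients are exactly indexed by this set, with signs `±1` and pairwise
distinct exponents) is a polynomial if and only if `ω ∈ ℤ`. -/
theorem binom2_support_finite_iff_integer (ω : ℤ_[2]) :
    {k : ℕ | binom2 (ω + (k : ℤ_[2]) + 1) (2 * k + 1) = 1}.Finite
      ↔ ∃ a : ℤ, ω = (a : ℤ_[2]) := by
  constructor
  · intro hfin
    by_contra h
    obtain ⟨B, hB⟩ := hfin.bddAbove
    obtain ⟨k, hk, hkB⟩ := BinomSupport.exists_ge_mem (B + 1) ω h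
    have : k ≤ B := hB hk
    omega
  · rintro ⟨a, rfl⟩
    apply (Set.finite_Iic a.natAbs).subset
    intro k hk
    have := BinomSupport.le_of_mem k a hk
    rw [Set.mem_Iic]
    omega
end

section
/- Let λ_n = 2^{n+1} - 1, let ω be a 2-adic integer, and let G_ω(X) = Σ_{k≥0} (ω + k + 1 choose 2k+1)₂ · X^k ∈ 𝔽₂[[X]] be the reduction modulo 2 of Q_ω. Then the following are equivalent: (a) G_ω is rational, i.e., there exist polynomials A, B ∈ 𝔽₂[X] with B ≠ 0 and B·G_ω = A; (b) G_ω is a polynomial; (c) ω is a rational integer (ω lies in the image of ℤ in ℤ₂). -/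
namespace QOmega

open PowerSeries

/-! ### Binary digits and the generalized binomial coefficient -/

/-- The approximation of `ω` modulo `2 ^ n` is the only natural number below `2 ^ n` that is
congruent to `ω`. -/
lemma appr_eq (ω : ℤ_[2]) (n b : ℕ) (hb : b < 2 ^ n) (h : (2 : ℤ_[2]) ^ n ∣ ω - b) :
    ω.appr n = b := by
  have h1 := PadicInt.zmod_congr_of_sub_mem_span n ω (ω.appr n) b (PadicInt.appr_spec n ω)
    (Ideal.mem_span_singleton.2 (by exact_mod_cast h))
  rw [ZMod.natCast_eq_natCast_iff'] at h1
  rwa [Nat.mod_eq_of_lt (PadicInt.appr_lt ω n), Nat.mod_eq_of_lt hb] at h1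

lemma dvd_sub_appr (ω : ℤ_[2]) (n : ℕ) : (2 : ℤ_[2]) ^ n ∣ ω - ω.appr n := by
  simpa [Ideal.mem_span_singleton] using PadicInt.appr_spec n ω

lemma appr_two_mul_add (a : ℤ_[2]) (e n : ℕ) (he : e < 2) :
    (2 * a + e).appr (n + 1) = 2 * a.appr n + e := by
  apply appr_eq
  · have := PadicInt.appr_lt a n
    rw [pow_succ]
    omega
  · obtain ⟨c, hc⟩ := dvd_sub_appr a n
    refine ⟨c, ?_⟩
    push_cast
    rw [pow_succ]
    linear_combination 2 * hc

lemma padicDigit_zero (a : ℤ_[2]) (e : ℕ) (he : e < 2) : padicDigit (2 * a + e) 0 = e := by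
  have h0 : a.appr 0 = 0 := by have := PadicInt.appr_lt a 0; omega
  unfold padicDigit
  rw [appr_two_mul_add a e 0 he, h0]
  interval_cases e <;> simp

lemma padicDigit_succ (a : ℤ_[2]) (e j : ℕ) (he : e < 2) :
    padicDigit (2 * a + e) (j + 1) = padicDigit a j := by
  unfold padicDigit
  rw [appr_two_mul_add a e (j + 1) he, Nat.testBit_succ]
  congr 3
  omega

lemma exists_two_mul_add (ω : ℤ_[2]) : ∃ a : ℤ_[2], ω = 2 * a ∨ ω = 2 * a + 1 := by
  obtain ⟨a, ha⟩ := dvd_sub_appr ω 1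
  have := PadicInt.appr_lt ω 1
  refine ⟨a, ?_⟩
  rw [pow_one] at ha this
  interval_cases h : ω.appr 1
  · left; simpa using ha
  · right; push_cast at ha; linear_combination ha

/-- The product defining `binom2` may be truncated anywhere above the top binary digit of `k`. -/
lemma binom2_eq_prod (ω : ℤ_[2]) (k N : ℕ) (hk : k < 2 ^ N) :
    binom2 ω k = ∏ i ∈ Finset.range N,
      Nat.choose (padicDigit ω i) (if k.testBit i then 1 else 0) := by
  have key : ∀ M M' : ℕ, M ≤ M' → k < 2 ^ M →
      (∏ i ∈ Finset.range M, Nat.choose (padicDigit ω i) (if k.testBit i then 1 else 0)) =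
      ∏ i ∈ Finset.range M', Nat.choose (padicDigit ω i) (if k.testBit i then 1 else 0) := by
    intro M M' hM hk
    refine Finset.prod_subset (Finset.range_mono hM) fun i _ hi => ?_
    have hi' : M ≤ i := by simpa using hi
    rw [Nat.testBit_lt_two_pow (hk.trans_le (Nat.pow_le_pow_right two_pos hi'))]
    simp
  have hk' : k < 2 ^ (k + 1) :=
    Nat.lt_two_pow_self.trans (Nat.pow_lt_pow_right one_lt_two k.lt_succ_self)
  unfold binom2
  rcases le_total (k + 1) N with h | h
  · exact key _ _ h hk'
  · exact (key _ _ h hk).symm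

/-- Lucas' rule: splitting off the lowest binary digits of both arguments. -/
lemma binom2_lucas (a : ℤ_[2]) (e k f : ℕ) (he : e < 2) (hf : f < 2) :
    binom2 (2 * a + e) (2 * k + f) = binom2 a k * Nat.choose e f := by
  have hk : k < 2 ^ k := Nat.lt_two_pow_self
  rw [binom2_eq_prod a k k hk, binom2_eq_prod _ _ (k + 1) (by rw [pow_succ]; omega),
    Finset.prod_range_succ', padicDigit_zero a e he]
  congr 1
  · refine Finset.prod_congr rfl fun i _ => ?_
    rw [padicDigit_succ a e i he, Nat.testBit_succ, show (2 * k + f) / 2 = k by omega]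
  · congr 1
    interval_cases f <;> simp

/-- The binomial coefficient `(ω choose k)₂` as an element of `𝔽₂`. -/
noncomputable def b (ω : ℤ_[2]) (k : ℕ) : ZMod 2 := (binom2 ω k : ZMod 2)

lemma b_even_even (a : ℤ_[2]) (k : ℕ) : b (2 * a) (2 * k) = b a k := by
  simpa [b] using congrArg (Nat.cast (R := ZMod 2)) (binom2_lucas a 0 k 0 two_pos two_pos)

lemma b_even_odd (a : ℤ_[2]) (k : ℕ) : b (2 * a) (2 * k + 1) = 0 := by
  simpa [b] using congrArg (Nat.cast (R := ZMod 2)) (binom2_lucas a 0 k 1 two_pos one_lt_two)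

lemma b_odd_even (a : ℤ_[2]) (k : ℕ) : b (2 * a + 1) (2 * k) = b a k := by
  simpa [b] using congrArg (Nat.cast (R := ZMod 2)) (binom2_lucas a 1 k 0 one_lt_two two_pos)

lemma b_odd_odd (a : ℤ_[2]) (k : ℕ) : b (2 * a + 1) (2 * k + 1) = b a k := by
  simpa [b] using congrArg (Nat.cast (R := ZMod 2)) (binom2_lucas a 1 k 1 one_lt_two one_lt_two)

lemma b_zero (a : ℤ_[2]) : b a 0 = 1 := by
  simp [b, binom2]

/-- Pascal's rule in `𝔽₂`, by induction on the binary expansion of `k`. -/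
lemma b_pascal (ω : ℤ_[2]) (k : ℕ) : b (ω + 1) (k + 1) = b ω k + b ω (k + 1) := by
  induction k using Nat.strong_induction_on generalizing ω with
  | _ k ih =>
    obtain ⟨a, rfl | rfl⟩ := exists_two_mul_add ω <;>
      obtain ⟨j, rfl | rfl⟩ := k.even_or_odd'
    · rw [b_odd_odd, b_even_even, b_even_odd, add_zero]
    · rw [show 2 * j + 1 + 1 = 2 * (j + 1) by ring, b_odd_even, b_even_odd, b_even_even, zero_add]
    · rw [show 2 * a + 1 + 1 = 2 * (a + 1) by ring, b_even_odd, b_odd_even, b_odd_odd,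
        CharTwo.add_self_eq_zero]
    · rw [show 2 * a + 1 + 1 = 2 * (a + 1) by ring, show 2 * j + 1 + 1 = 2 * (j + 1) by ring,
        b_even_even, b_odd_odd, b_odd_even, ih j (by omega)]

/-! ### The Fibonacci series and their doubling formulas -/

lemma add_self (f : PowerSeries (ZMod 2)) : f + f = 0 := by
  ext n
  rw [map_add, map_zero, CharTwo.add_self_eq_zero]

/-- The squaring map on `𝔽₂⟦X⟧` is the substitution `X ↦ X²`. -/
lemma sq_eq_expand (f : PowerSeries (ZMod 2)) : f ^ 2 = expand 2 two_ne_zero f := by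
  have h := MvPowerSeries.map_frobenius_expand (σ := Unit) (R := ZMod 2) 2 two_ne_zero (f := f)
  rw [ZMod.frobenius_zmod, MvPowerSeries.map_id] at h
  exact h.symm

lemma coeff_sq_even (f : PowerSeries (ZMod 2)) (j : ℕ) : coeff (2 * j) (f ^ 2) = coeff j f := by
  rw [sq_eq_expand, coeff_expand_mul]

lemma coeff_sq_odd (f : PowerSeries (ZMod 2)) (j : ℕ) : coeff (2 * j + 1) (f ^ 2) = 0 := by
  rw [sq_eq_expand, coeff_expand_of_not_dvd]
  omega

lemma coeff_even (u v : PowerSeries (ZMod 2)) (j : ℕ) :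
    coeff (2 * j) (u ^ 2 + X * v ^ 2) = coeff j u := by
  rw [map_add, coeff_sq_even]
  rcases j with _ | j
  · simp
  · rw [show 2 * (j + 1) = 2 * j + 1 + 1 by ring, coeff_succ_X_mul, coeff_sq_odd, add_zero]

lemma coeff_odd (u v : PowerSeries (ZMod 2)) (j : ℕ) :
    coeff (2 * j + 1) (u ^ 2 + X * v ^ 2) = coeff j v := by
  rw [map_add, coeff_sq_odd, coeff_succ_X_mul, coeff_sq_even, zero_add]

lemma ext_even_odd {f g : PowerSeries (ZMod 2)} (h0 : ∀ j, coeff (2 * j) f = coeff (2 * j) g)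
    (h1 : ∀ j, coeff (2 * j + 1) f = coeff (2 * j + 1) g) : f = g := by
  ext n
  obtain ⟨j, rfl | rfl⟩ := n.even_or_odd'
  · exact h0 j
  · exact h1 j

/-- `𝔽₂⟦X⟧` is free over its subring of squares with basis `1, X`. -/
lemma sq_add_inj {u v u' v' : PowerSeries (ZMod 2)}
    (h : u ^ 2 + X * v ^ 2 = u' ^ 2 + X * v' ^ 2) : u = u' ∧ v = v' := by
  constructor <;> ext j
  · rw [← coeff_even u v, h, coeff_even]
  · rw [← coeff_odd u v, h, coeff_odd]

/-- The series `Σ_k (m + k choose 2k + 1)₂ X^k`, so that `G_ω = F (ω + 1)`. It interpolates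
2-adically the Fibonacci polynomials over `𝔽₂`. -/
noncomputable def F (m : ℤ_[2]) : PowerSeries (ZMod 2) :=
  PowerSeries.mk fun k => b (m + k) (2 * k + 1)

/-- The companion series `Σ_k (m + k choose 2k)₂ X^k`. -/
noncomputable def H (m : ℤ_[2]) : PowerSeries (ZMod 2) :=
  PowerSeries.mk fun k => b (m + k) (2 * k)

lemma F_succ (m : ℤ_[2]) : F (m + 1) = F m + H m := by
  ext k
  simp only [F, H, coeff_mk, map_add]
  rw [show m + 1 + (k : ℤ_[2]) = m + k + 1 by ring, b_pascal, add_comm]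

lemma F_even (m : ℤ_[2]) : F (2 * m) = X * F m ^ 2 := by
  have h0 : X * F m ^ 2 = 0 ^ 2 + X * F m ^ 2 := by ring
  rw [h0]
  refine ext_even_odd (fun j => ?_) fun j => ?_
  · rw [coeff_even]
    simp only [F, coeff_mk, map_zero]
    push_cast
    rw [show 2 * m + 2 * (j : ℤ_[2]) = 2 * (m + j) by ring, b_even_odd]
  · rw [coeff_odd]
    simp only [F, coeff_mk]
    push_cast
    rw [show 2 * m + (2 * (j : ℤ_[2]) + 1) = 2 * (m + j) + 1 by ring, b_odd_odd]

lemma F_odd (m : ℤ_[2]) : F (2 * m + 1) = H m ^ 2 := by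
  refine ext_even_odd (fun j => ?_) fun j => ?_
  · rw [coeff_sq_even]
    simp only [F, H, coeff_mk]
    push_cast
    rw [show 2 * m + 1 + 2 * (j : ℤ_[2]) = 2 * (m + j) + 1 by ring, b_odd_odd]
  · rw [coeff_sq_odd]
    simp only [F, coeff_mk]
    push_cast
    rw [show 2 * m + 1 + (2 * (j : ℤ_[2]) + 1) = 2 * (m + j + 1) by ring, b_even_odd]

lemma H_even (m : ℤ_[2]) : H (2 * m) = H m ^ 2 + X * F m ^ 2 := by
  have h := F_succ (2 * m)
  rw [F_odd, F_even] at h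
  rw [h, add_right_comm, add_self, zero_add]

lemma H_odd (m : ℤ_[2]) : H (2 * m + 1) = H m ^ 2 + X * F (m + 1) ^ 2 := by
  have h := F_succ (2 * m + 1)
  rw [F_odd, show 2 * m + 1 + 1 = 2 * (m + 1) by ring, F_even] at h
  rw [h, ← add_assoc, add_self, zero_add]

lemma constantCoeff_F_even (m : ℤ_[2]) : coeff 0 (F (2 * m)) = 0 := by
  simp [F_even]

lemma constantCoeff_F_odd (m : ℤ_[2]) : coeff 0 (F (2 * m + 1)) = 1 := by
  simpa [F, b_zero] using b_odd_odd m 0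

lemma eq_zero_of_forall_pow_dvd {m : ℤ_[2]} (h : ∀ n : ℕ, (2 : ℤ_[2]) ^ n ∣ m) : m = 0 := by
  by_contra hm
  obtain ⟨n, hn⟩ := FiniteMultiplicity.of_prime_left
    (by exact_mod_cast PadicInt.prime_p (p := 2)) hm
  exact hn (h _)

/-- `F` vanishes only at `0`: a vanishing `F m` forces `m` to be even, and then `F (m / 2)`
vanishes too. -/
lemma eq_zero_of_F_eq_zero {m : ℤ_[2]} (hm : F m = 0) : m = 0 := by
  refine eq_zero_of_forall_pow_dvd fun n => ?_
  induction n generalizing m with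
  | zero => simp
  | succ n ih =>
    obtain ⟨a, rfl | rfl⟩ := exists_two_mul_add m
    · rw [F_even] at hm
      have ha : F a = 0 := by simpa [X_ne_zero] using hm
      rw [pow_succ']
      exact mul_dvd_mul_left 2 (ih ha)
    · have := constantCoeff_F_odd a
      simp [hm] at this

/-! ### Descent on rational power series -/

/-- `f` is the power series of a rational function. -/
def IsRat (f : PowerSeries (ZMod 2)) : Prop :=
  ∃ A B : Polynomial (ZMod 2), B ≠ 0 ∧ (B : PowerSeries (ZMod 2)) * f = A

/-- `f` and `g` are rational with a common denominator, and this denominator and both numerators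
have degree at most `D`. -/
def IsRatPair (D : ℕ) (f g : PowerSeries (ZMod 2)) : Prop :=
  ∃ B A C : Polynomial (ZMod 2), B ≠ 0 ∧ B.natDegree ≤ D ∧ A.natDegree ≤ D ∧ C.natDegree ≤ D ∧
    (B : PowerSeries (ZMod 2)) * f = A ∧ (B : PowerSeries (ZMod 2)) * g = C

lemma IsRatPair.swap {D : ℕ} {f g : PowerSeries (ZMod 2)} (h : IsRatPair D f g) :
    IsRatPair D g f := by
  obtain ⟨B, A, C, hB, dB, dA, dC, hf, hg⟩ := h
  exact ⟨B, C, A, hB, dB, dC, dA, hg, hf⟩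

lemma IsRatPair.add_right {D : ℕ} {f g : PowerSeries (ZMod 2)} (h : IsRatPair D f g) :
    IsRatPair D f (f + g) := by
  obtain ⟨B, A, C, hB, dB, dA, dC, hf, hg⟩ := h
  refine ⟨B, A, A + C, hB, dB, dA, Polynomial.natDegree_add_le_of_degree_le dA dC, hf, ?_⟩
  rw [mul_add, hf, hg, Polynomial.coe_add]

lemma IsRat.pair {f g : PowerSeries (ZMod 2)} (hf : IsRat f) (hg : IsRat g) :
    ∃ D, IsRatPair D f g := by
  obtain ⟨A, B, hB, h⟩ := hf
  obtain ⟨A₂, B₂, hB₂, hg₂⟩ := hg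
  refine ⟨max (B * B₂).natDegree (max (A * B₂).natDegree (B * A₂).natDegree),
    B * B₂, A * B₂, B * A₂, mul_ne_zero hB hB₂, by simp, by simp, by simp, ?_, ?_⟩
  · rw [Polynomial.coe_mul, Polynomial.coe_mul, ← h]; ring
  · rw [Polynomial.coe_mul, Polynomial.coe_mul, ← hg₂]; ring

/-- Splitting a polynomial into its even and odd parts halves the degree. -/
lemma exists_even_odd (A : Polynomial (ZMod 2)) :
    ∃ A0 A1 : Polynomial (ZMod 2), (A : PowerSeries (ZMod 2)) = (A0 : PowerSeries (ZMod 2)) ^ 2 +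
      X * (A1 : PowerSeries (ZMod 2)) ^ 2 ∧
      A0.natDegree ≤ A.natDegree / 2 ∧ A1.natDegree ≤ A.natDegree / 2 := by
  refine ⟨A.contract 2, A.divX.contract 2, ext_even_odd (fun j => ?_) fun j => ?_, ?_, ?_⟩
  · rw [coeff_even, Polynomial.coeff_coe, Polynomial.coeff_coe,
      Polynomial.coeff_contract two_ne_zero, mul_comm]
  · rw [coeff_odd, Polynomial.coeff_coe, Polynomial.coeff_coe,
      Polynomial.coeff_contract two_ne_zero, Polynomial.coeff_divX, mul_comm]
  · rw [Polynomial.natDegree_le_iff_coeff_eq_zero]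
    intro N hN
    rw [Polynomial.coeff_contract two_ne_zero]
    exact Polynomial.coeff_eq_zero_of_natDegree_lt (by omega)
  · rw [Polynomial.natDegree_le_iff_coeff_eq_zero]
    intro N hN
    rw [Polynomial.coeff_contract two_ne_zero, Polynomial.coeff_divX]
    exact Polynomial.coeff_eq_zero_of_natDegree_lt (by omega)

/-- The even and odd parts of a rational series are rational. -/
lemma IsRat.parts {u v : PowerSeries (ZMod 2)} (h : IsRat (u ^ 2 + X * v ^ 2)) :
    IsRat u ∧ IsRat v := by
  obtain ⟨A, B, hB, h⟩ := h
  obtain ⟨C0, C1, hC, -, -⟩ := exists_even_odd (B * A)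
  -- Multiplying by `B` once more makes the denominator a square.
  have h2 : ((B : PowerSeries (ZMod 2)) * u) ^ 2 + X * ((B : PowerSeries (ZMod 2)) * v) ^ 2 =
      (C0 : PowerSeries (ZMod 2)) ^ 2 + X * (C1 : PowerSeries (ZMod 2)) ^ 2 := by
    rw [← hC, Polynomial.coe_mul, ← h]; ring
  obtain ⟨h0, h1⟩ := sq_add_inj h2
  exact ⟨⟨C0, B, hB, h0⟩, ⟨C1, B, hB, h1⟩⟩

/-- The descent step: taking square roots halves the degrees of numerators and denominator. -/
lemma IsRatPair.descent {D : ℕ} {g h : PowerSeries (ZMod 2)}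
    (hp : IsRatPair D (X * g ^ 2) (h ^ 2)) : IsRatPair (D / 2) g h := by
  obtain ⟨B, A, C, hB, dB, dA, dC, hg, hh⟩ := hp
  obtain ⟨B0, B1, eB, dB0, dB1⟩ := exists_even_odd B
  obtain ⟨A0, A1, eA, dA0, dA1⟩ := exists_even_odd A
  obtain ⟨C0, C1, eC, dC0, dC1⟩ := exists_even_odd C
  have key1 : (X * ((B1 : PowerSeries (ZMod 2)) * g)) ^ 2 + X * ((B0 : PowerSeries (ZMod 2)) * g) ^ 2 =
      (A0 : PowerSeries (ZMod 2)) ^ 2 + X * (A1 : PowerSeries (ZMod 2)) ^ 2 := by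
    rw [← eA, ← hg, eB]; ring
  have key2 : ((B0 : PowerSeries (ZMod 2)) * h) ^ 2 + X * ((B1 : PowerSeries (ZMod 2)) * h) ^ 2 =
      (C0 : PowerSeries (ZMod 2)) ^ 2 + X * (C1 : PowerSeries (ZMod 2)) ^ 2 := by
    rw [← eC, ← hh, eB]; ring
  obtain ⟨hA0, hA1⟩ := sq_add_inj key1
  obtain ⟨hC0, hC1⟩ := sq_add_inj key2
  -- One of the two parts of `B` is nonzero, and either one can serve as the new denominator.
  by_cases hB0 : B0 = 0
  · have hB1 : B1 ≠ 0 := by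
      rintro rfl
      subst hB0
      exact hB (by simpa using eB)
    refine ⟨B1, A0.divX, C1, hB1, by omega, ?_, by omega, ?_, hC1⟩
    · rw [Polynomial.natDegree_divX_eq_natDegree_tsub_one]; omega
    · ext n
      rw [Polynomial.coeff_coe, Polynomial.coeff_divX, ← Polynomial.coeff_coe, ← hA0,
        coeff_succ_X_mul]
  · exact ⟨B0, A1, C0, hB0, by omega, by omega, by omega, hA1, hC0⟩

/-- With degree bound `0` the denominator is `1`, so the first series is a constant; apply `swap` for
the second one. -/
lemma IsRatPair.const {f g : PowerSeries (ZMod 2)} (h : IsRatPair 0 f g) :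
    ∃ c : ZMod 2, f = C c := by
  obtain ⟨B, A, -, hB, dB, dA, -, hf, -⟩ := h
  obtain ⟨β, rfl⟩ := Polynomial.natDegree_eq_zero.1 (Nat.le_zero.1 dB)
  obtain ⟨α, rfl⟩ := Polynomial.natDegree_eq_zero.1 (Nat.le_zero.1 dA)
  have hβ : β = 1 := by
    have : ∀ x : ZMod 2, x ≠ 0 → x = 1 := by decide
    exact this β (by simpa using hB)
  subst hβ
  exact ⟨α, by simpa using hf⟩

/-! ### The three conditions -/

lemma eq_zero_of_F_even_const {m : ℤ_[2]} {c : ZMod 2} (h : F (2 * m) = C c) : 2 * m = 0 := by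
  apply eq_zero_of_F_eq_zero
  have h0 := constantCoeff_F_even m
  rw [h] at h0
  have : c = 0 := by simpa using h0
  rw [h, this, map_zero]

/-- If consecutive values `F m`, `F (m + 1)` are both rational then `m` is an integer: halving `m`
halves the degrees until both values are constant, which leaves only `m = 0` and `m = -1`. -/
lemma int_of_isRatPair (D : ℕ) : ∀ m : ℤ_[2], IsRatPair D (F m) (F (m + 1)) →
    ∃ a : ℤ, m = a := by
  induction D using Nat.strong_induction_on with
  | _ D ih =>
    intro m h
    rcases Nat.eq_zero_or_pos D with rfl | hD
    · obtain ⟨a, rfl | rfl⟩ := exists_two_mul_add m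
      · obtain ⟨c, hc⟩ := h.const
        exact ⟨0, by simpa using eq_zero_of_F_even_const hc⟩
      · obtain ⟨c, hc⟩ := h.swap.const
        rw [show 2 * a + 1 + 1 = 2 * (a + 1) by ring] at hc
        exact ⟨-1, by push_cast; linear_combination eq_zero_of_F_even_const hc⟩
    · obtain ⟨a, rfl | rfl⟩ := exists_two_mul_add m
      · rw [F_odd, F_even] at h
        have h2 := h.descent.add_right
        rw [← F_succ] at h2
        obtain ⟨n, hn⟩ := ih _ (by omega) _ h2
        exact ⟨2 * n, by push_cast; rw [hn]⟩
      · rw [F_odd, show 2 * a + 1 + 1 = 2 * (a + 1) by ring, F_even] at h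
        have h2 := h.swap.descent.add_right.swap
        rw [F_succ, add_assoc, add_self, add_zero, ← F_succ] at h2
        obtain ⟨n, hn⟩ := ih _ (by omega) _ h2
        exact ⟨2 * n + 1, by push_cast; rw [hn]⟩

lemma int_of_isRat_pair {m : ℤ_[2]} (h0 : IsRat (F m)) (h1 : IsRat (F (m + 1))) :
    ∃ a : ℤ, m = a := by
  obtain ⟨D, hD⟩ := h0.pair h1
  exact int_of_isRatPair D m hD

lemma IsRat.add {f g : PowerSeries (ZMod 2)} (hf : IsRat f) (hg : IsRat g) : IsRat (f + g) := by
  obtain ⟨D, hD⟩ := hf.pair hg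
  obtain ⟨B, -, A, hB, -, -, -, -, h⟩ := hD.add_right
  exact ⟨A, B, hB, h⟩

/-- Whatever the parity of `m`, the even and odd parts of `H m` determine two consecutive values of
`F` at `⌊m / 2⌋`, which are therefore rational. -/
lemma int_of_isRat_H {m : ℤ_[2]} (h : IsRat (H m)) : ∃ a : ℤ, m = a := by
  obtain ⟨a, rfl | rfl⟩ := exists_two_mul_add m
  · rw [H_even] at h
    obtain ⟨h0, h1⟩ := h.parts
    obtain ⟨n, hn⟩ := int_of_isRat_pair h1 (by rw [F_succ]; exact h1.add h0)
    exact ⟨2 * n, by push_cast; rw [hn]⟩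
  · rw [H_odd] at h
    obtain ⟨h0, h1⟩ := h.parts
    have hF : IsRat (F a) := by
      have := h1.add h0
      rwa [F_succ, add_assoc, add_self, add_zero] at this
    obtain ⟨n, hn⟩ := int_of_isRat_pair hF h1
    exact ⟨2 * n + 1, by push_cast; rw [hn]⟩

lemma int_of_isRat_F {m : ℤ_[2]} (h : IsRat (F m)) : ∃ a : ℤ, m = a := by
  by_cases hm : m = 0
  · exact ⟨0, by simpa using hm⟩
  obtain ⟨n, u, hu, rfl⟩ := WfDvdMonoid.max_power_factor hm
    (show Irreducible (2 : ℤ_[2]) by exact_mod_cast (PadicInt.prime_p (p := 2)).irreducible)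
  clear hm
  -- The powers of `2` are removed by `F (2 * m) = X * F m ^ 2`.
  have hFu : IsRat (F u) := by
    induction n with
    | zero => simpa using h
    | succ n ih =>
      rw [pow_succ', mul_assoc, F_even, ← zero_add (X * _), ← zero_pow two_ne_zero] at h
      exact ih h.parts.2
  obtain ⟨a, rfl | rfl⟩ := exists_two_mul_add u
  · exact absurd (dvd_mul_right 2 a) hu
  · rw [F_odd, ← add_zero (H a ^ 2), ← mul_zero X, ← zero_pow two_ne_zero] at hFu
    obtain ⟨k, hk⟩ := int_of_isRat_H hFu.parts.1
    exact ⟨2 ^ n * (2 * k + 1), by push_cast; rw [hk]⟩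

/-- The subring of polynomials in `𝔽₂⟦X⟧`. -/
noncomputable def polys : Subring (PowerSeries (ZMod 2)) :=
  (Polynomial.coeToPowerSeries.ringHom (R := ZMod 2)).range

lemma X_mem_polys : X ∈ polys := ⟨Polynomial.X, by simp⟩

lemma F_zero : F 0 = 0 := by
  have h := F_even 0
  rw [mul_zero] at h
  have h1 : F 0 * (1 - X * F 0) = 0 := by linear_combination h
  rcases mul_eq_zero.1 h1 with h2 | h2
  · exact h2
  · have := congrArg (coeff 0) h2
    simp at this

lemma F_odd' (m : ℤ_[2]) : F (2 * m + 1) = F m ^ 2 + F (m + 1) ^ 2 := by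
  rw [F_odd, F_succ]
  linear_combination -add_self (F m ^ 2) - add_self (F m * H m)

lemma mem_polys_of_sq_eq {f : PowerSeries (ZMod 2)} (h : f = f ^ 2) : f ∈ polys := by
  have h1 : f * (1 - f) = 0 := by linear_combination h
  rcases mul_eq_zero.1 h1 with h2 | h2
  · rw [h2]; exact zero_mem _
  · rw [← sub_eq_zero.1 h2]; exact one_mem _

/-- At integers `F` takes polynomial values, by the doubling formulas; `m = ±1` are the fixed points
of the recursion, where `F m = F m ^ 2`. -/
lemma F_int_mem_polys (n : ℕ) : ∀ a : ℤ, a.natAbs = n → F (a : ℤ_[2]) ∈ polys := by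
  induction n using Nat.strong_induction_on with
  | _ n ih =>
    intro a ha
    by_cases h0 : a = 0
    · rw [h0, Int.cast_zero, F_zero]; exact zero_mem _
    by_cases h1 : a = 1
    · apply mem_polys_of_sq_eq
      have h := F_odd' 0
      simpa [h1, F_zero] using h
    by_cases h2 : a = -1
    · apply mem_polys_of_sq_eq
      have h := F_odd' (-1)
      norm_num [F_zero] at h
      simpa [h2] using h
    obtain ⟨k, rfl | rfl⟩ := a.even_or_odd'
    · push_cast
      rw [F_even]
      exact mul_mem X_mem_polys (pow_mem (ih _ (by omega) k rfl) 2)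
    · have hk := ih _ (by omega) (k + 1) rfl
      push_cast at hk ⊢
      rw [F_odd']
      exact add_mem (pow_mem (ih _ (by omega) k rfl) 2) (pow_mem hk 2)

end QOmega

/-- For `G_ω(X) = Σ_k (ω+k+1 choose 2k+1)₂ X^k ∈ 𝔽₂[[X]]`, the reduction
modulo 2 of `Q_ω` (case `λ_n = 2^{n+1}-1`), the following are equivalent:
(a) `G_ω` is rational (`B·G_ω = A` with polynomials `A, B`, `B ≠ 0`);
(b) `G_ω` is a polynomial;
(c) `ω` is a rational integer. -/
theorem Q_omega_mod_two_rational_iff_polynomial_iff_integer (ω : ℤ_[2])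
    (G : PowerSeries (ZMod 2))
    (hG : G = PowerSeries.mk fun k : ℕ =>
      ((binom2 (ω + (k : ℤ_[2]) + 1) (2 * k + 1) : ZMod 2))) :
    ((∃ A B : Polynomial (ZMod 2), B ≠ 0 ∧
        (B : PowerSeries (ZMod 2)) * G = (A : PowerSeries (ZMod 2)))
      ↔ ∃ A : Polynomial (ZMod 2), G = (A : PowerSeries (ZMod 2))) ∧
    ((∃ A : Polynomial (ZMod 2), G = (A : PowerSeries (ZMod 2)))
      ↔ ∃ a : ℤ, ω = (a : ℤ_[2])) := by
  have hGF : G = QOmega.F (ω + 1) := by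
    rw [hG]
    ext k
    simp only [QOmega.F, QOmega.b, PowerSeries.coeff_mk]
    rw [add_right_comm]
  have hba : (∃ A : Polynomial (ZMod 2), G = (A : PowerSeries (ZMod 2))) →
      ∃ A B : Polynomial (ZMod 2), B ≠ 0 ∧
        (B : PowerSeries (ZMod 2)) * G = (A : PowerSeries (ZMod 2)) := by
    rintro ⟨A, hA⟩
    exact ⟨A, 1, one_ne_zero, by rw [Polynomial.coe_one, one_mul, hA]⟩
  have hac : (∃ A B : Polynomial (ZMod 2), B ≠ 0 ∧
        (B : PowerSeries (ZMod 2)) * G = (A : PowerSeries (ZMod 2))) →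
      ∃ a : ℤ, ω = (a : ℤ_[2]) := by
    intro h
    rw [hGF] at h
    obtain ⟨a, ha⟩ := QOmega.int_of_isRat_F h
    exact ⟨a - 1, by push_cast; linear_combination ha⟩
  have hcb : (∃ a : ℤ, ω = (a : ℤ_[2])) →
      ∃ A : Polynomial (ZMod 2), G = (A : PowerSeries (ZMod 2)) := by
    rintro ⟨a, rfl⟩
    obtain ⟨A, hA⟩ := QOmega.F_int_mem_polys _ (a + 1) rfl
    refine ⟨A, ?_⟩
    push_cast at hA
    rw [hGF, ← hA, Polynomial.coeToPowerSeries.ringHom_apply]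
  exact ⟨⟨fun h => hcb (hac h), hba⟩, ⟨fun h => hac (hba h), hcb⟩⟩
end
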